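/- arXiv:2012.04816 — 2 statements merged into one kernel-verified Lean document; each statement's English description precedes it below -/
import Mathlib

section
/- For every positive integer m and every tree T of order m, every 2-connected finite simple graph G with minimum degree δ(G) ≥ m + 2 contains a subgraph T′ isomorphic to T such that G − V(T′) is still 2-connected. -/
/-- A graph `G` is `k`-connected if it has at least `k+1` vertices and
deleting any set of fewer than `k` vertices leaves a connected graph. -/
def KConnected {V : Type*} (G : SimpleGraph V) (k : ℕ) : Prop :=
  k + 1 ≤ Nat.card V ∧
    ∀ X : Finset V, X.card < k → (G.induce ((X : Set V)ᶜ)).Connected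

open Classical in
theorem greedyExt {V W : Type*} [Fintype W] (G : SimpleGraph V)
    (par : W → W) (r : W) (rk : W → ℕ) (hrk : ∀ w, w ≠ r → rk (par w) < rk w)
    (P : W → V → Prop) (S0 S1 : Finset W) (f0 : W → V)
    (hpar : ∀ w ∈ S1, w ∉ S0 → w ≠ r ∧ par w ∈ S1)
    (hinj0 : Set.InjOn f0 S0)
    (ext : ∀ S : Finset W, S0 ⊆ S → S ⊆ S1 → ∀ f : W → V, (∀ w ∈ S0, f w = f0 w) →
      Set.InjOn f S → (∀ w ∈ S, w ∉ S0 → P w (f w)) → ∀ z ∈ S1, z ∉ S → par z ∈ S →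
      ∃ v, P z v ∧ G.Adj (f (par z)) v ∧ v ∉ S.image f) (h01 : S0 ⊆ S1) :
    ∃ f : W → V, (∀ w ∈ S0, f w = f0 w) ∧ Set.InjOn f S1 ∧
      ∀ w ∈ S1, w ∉ S0 → P w (f w) ∧ G.Adj (f (par w)) (f w) := by
  suffices H : ∀ n : ℕ, ∀ S : Finset W, (S1 \ S).card = n → S0 ⊆ S → S ⊆ S1 →
      ∀ f : W → V, (∀ w ∈ S0, f w = f0 w) → Set.InjOn f S →
      (∀ w ∈ S, w ∉ S0 → P w (f w) ∧ par w ∈ S ∧ G.Adj (f (par w)) (f w)) →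
      ∃ f : W → V, (∀ w ∈ S0, f w = f0 w) ∧ Set.InjOn f S1 ∧
      ∀ w ∈ S1, w ∉ S0 → P w (f w) ∧ G.Adj (f (par w)) (f w) from
    H _ S0 rfl (Finset.Subset.refl _) h01 f0 (fun _ _ => rfl) hinj0 (fun w h h' => absurd h h')
  intro n
  induction n with
  | zero =>
    intro S hc h0 h1 f hf hi hP
    have : S1 ⊆ S := by
      rw [Finset.card_eq_zero, Finset.sdiff_eq_empty_iff_subset] at hc; exact hc
    obtain rfl := Finset.Subset.antisymm h1 this
    exact ⟨f, hf, hi, fun w hw hw' => ⟨(hP w hw hw').1, (hP w hw hw').2.2⟩⟩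
  | succ n ih =>
    intro S hc h0 h1 f hf hi hP
    have hne : (S1 \ S).Nonempty := by rw [← Finset.card_pos]; omega
    obtain ⟨z, hz, hmin⟩ := Finset.exists_min_image _ rk hne
    rw [Finset.mem_sdiff] at hz
    have hz0 : z ∉ S0 := fun h => hz.2 (h0 h)
    obtain ⟨hzr, hpz⟩ := hpar z hz.1 hz0
    have hpS : par z ∈ S := by
      by_contra hn
      have := hmin (par z) (Finset.mem_sdiff.2 ⟨hpz, hn⟩)
      have := hrk z hzr
      omega
    obtain ⟨v, hv, hadj, hvS⟩ := ext S h0 h1 f hf hi (fun w hw hw' => (hP w hw hw').1) z hz.1 hz.2 hpS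
    have hne' : ∀ w ∈ S, w ≠ z := fun w hw h => hz.2 (h ▸ hw)
    have hup : ∀ w ∈ S, Function.update f z v w = f w := fun w hw =>
      Function.update_of_ne (hne' w hw) _ _
    refine ih (insert z S) ?_ (h0.trans (Finset.subset_insert _ _)) ?_ (Function.update f z v) ?_ ?_ ?_
    · have : S1 \ insert z S = (S1 \ S).erase z := by
        ext w; simp only [Finset.mem_sdiff, Finset.mem_insert, Finset.mem_erase]; tauto
      rw [this, Finset.card_erase_of_mem (Finset.mem_sdiff.2 hz)]; omega
    · exact Finset.insert_subset hz.1 h1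
    · intro w hw; rw [hup w (h0 hw)]; exact hf w hw
    · rw [Finset.coe_insert, Set.injOn_insert (by simpa using hz.2)]
      refine ⟨?_, ?_⟩
      · intro a ha b hb hab
        rw [hup a ha, hup b hb] at hab
        exact hi ha hb hab
      · rintro ⟨w, hw, hw'⟩
        rw [hup w hw, Function.update_self] at hw'
        exact hvS (Finset.mem_image.2 ⟨w, hw, hw'⟩)
    · intro w hw hw0
      rcases Finset.mem_insert.1 hw with rfl | hw
      · rw [Function.update_self, hup _ hpS]
        exact ⟨hv, Finset.mem_insert_of_mem hpS, hadj⟩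
      · obtain ⟨h1, h2, h3⟩ := hP w hw hw0
        rw [hup w hw, hup _ h2]
        exact ⟨h1, Finset.mem_insert_of_mem h2, h3⟩

/-- copy of the rooted tree inside `H` -/
def IsCopy {V W : Type*} (G : SimpleGraph V) (par : W → W) (r : W) (H : Finset V) (f : W → V) : Prop :=
  Function.Injective f ∧ (∀ w, w ≠ r → G.Adj (f (par w)) (f w)) ∧ ∀ w, f w ∈ H

open Classical in
theorem minDegCopy {V W : Type*} [Fintype W] (G : SimpleGraph V)
    (par : W → W) (r : W) (rk : W → ℕ) (hrk : ∀ w, w ≠ r → rk (par w) < rk w)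
    (H : Finset V) (hne : H.Nonempty)
    (hdeg : ∀ u ∈ H, Fintype.card W ≤ (H.filter (fun x => G.Adj u x)).card + 1) :
    ∃ f, IsCopy G par r H f := by
  obtain ⟨u, hu⟩ := hne
  obtain ⟨f, hf0, hi, hf⟩ := greedyExt G par r rk hrk (fun _ x => x ∈ H) {r} Finset.univ (fun _ => u)
    (fun w _ hw => ⟨by simpa using hw, Finset.mem_univ _⟩) (by simp) (by
      intro S hS0 _ f hf hi hP z _ hz hpz
      have hin : f (par z) ∈ H := by
        by_cases h : par z = r
        · rw [h, hf r (by simp)]; exact hu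
        · exact hP _ hpz (by simpa using h)
      have h1 := hdeg _ hin
      have h2 : (((S.erase (par z)).image f)).card + 2 ≤ Fintype.card W := by
        have := Finset.card_image_le (s := S.erase (par z)) (f := f)
        have h3 := Finset.card_erase_add_one hpz
        have h4 : S.card < Fintype.card W := by
          rw [← Finset.card_univ]
          exact Finset.card_lt_card ⟨Finset.subset_univ _, fun h => hz (h (Finset.mem_univ _))⟩
        omega
      obtain ⟨v, hv, hv'⟩ := Finset.exists_mem_notMem_of_card_lt_card
        (s := (S.erase (par z)).image f) (t := H.filter (fun x => G.Adj (f (par z)) x)) (by omega)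
      rw [Finset.mem_filter] at hv
      refine ⟨v, hv.1, hv.2, ?_⟩
      intro h
      obtain ⟨w, hw, rfl⟩ := Finset.mem_image.1 h
      refine hv' (Finset.mem_image.2 ⟨w, Finset.mem_erase.2 ⟨?_, hw⟩, rfl⟩)
      rintro rfl
      exact G.loopless.irrefl _ hv.2) (Finset.subset_univ _)
  refine ⟨f, fun a b h => hi (by simp) (by simp) h, fun w hw => (hf w (by simp) (by simpa using hw)).2, ?_⟩
  intro w
  by_cases h : w = r
  · rw [h, hf0 r (by simp)]; exact hu
  · exact (hf w (by simp) (by simpa using h)).1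

set_option maxHeartbeats 2000000 in
open Classical in
theorem localLemma {V W : Type*} [Fintype W] (G : SimpleGraph V)
    (par : W → W) (r : W) (rk : W → ℕ) (hrk : ∀ w, w ≠ r → rk (par w) < rk w) (hr : par r = r)
    (H : Finset V) (hcard : Fintype.card W < H.card)
    (hex : ∃ f, IsCopy G par r H f)
    (hdeg : ∀ u ∈ H, (∃ f, IsCopy G par r H f ∧ u ∉ Set.range f) →
      Fintype.card W ≤ (H.filter (fun x => G.Adj u x)).card) (a : V) :
    ∃ f, IsCopy G par r H f ∧ a ∉ Set.range f := by
  by_contra hcon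
  -- `A` is the set of vertices in all copies
  set A : Finset V := H.filter (fun u => ∀ f, IsCopy G par r H f → u ∈ Set.range f) with hA
  set U : Finset V := H \ A with hU
  have hAf : ∀ f, IsCopy G par r H f → ∀ u ∈ A, u ∈ Set.range f := fun f hf u hu =>
    (Finset.mem_filter.1 hu).2 f hf
  have haA : a ∈ A := by
    have h : ∀ f, IsCopy G par r H f → a ∈ Set.range f := by
      intro f hf; by_contra h; exact hcon ⟨f, hf, h⟩
    obtain ⟨f, hf⟩ := hex
    obtain ⟨w, rfl⟩ := h f hf
    exact Finset.mem_filter.2 ⟨hf.2.2 w, h⟩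
  have hUmem : ∀ u, u ∈ U ↔ u ∈ H ∧ ∃ f, IsCopy G par r H f ∧ u ∉ Set.range f := by
    intro u
    rw [hU, Finset.mem_sdiff, hA, Finset.mem_filter]
    push Not
    constructor
    · rintro ⟨h1, h2⟩; exact ⟨h1, h2 h1⟩
    · rintro ⟨h1, h2⟩; exact ⟨h1, fun _ => h2⟩
  have hUdeg : ∀ u ∈ U, Fintype.card W ≤ (H.filter (fun x => G.Adj u x)).card := fun u hu =>
    hdeg u ((hUmem u).1 hu).1 ((hUmem u).1 hu).2
  have hUne : U.Nonempty := by
    obtain ⟨f, hf⟩ := hex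
    have : ((Finset.univ : Finset W).image f).card < H.card :=
      lt_of_le_of_lt Finset.card_image_le (by simpa using hcard)
    obtain ⟨u, hu, hu'⟩ := Finset.exists_mem_notMem_of_card_lt_card this
    refine ⟨u, (hUmem u).2 ⟨hu, f, hf, ?_⟩⟩
    simpa using hu'
  obtain ⟨v, hvU, hvmin⟩ := Finset.exists_min_image U (fun u => (U.filter (fun x => G.Adj u x)).card) hUne
  set j := (U.filter (fun x => G.Adj v x)).card with hj
  obtain ⟨hvH, f, hf, hvf⟩ := (hUmem v).1 hvU
  obtain ⟨hfi, hfe, hfH⟩ := hf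
  have hf : IsCopy G par r H f := ⟨hfi, hfe, hfH⟩
  have houtU : ∀ u ∈ H, u ∉ Set.range f → u ∈ U := fun u hu hu' => (hUmem u).2 ⟨hu, f, hf, hu'⟩
  set Y : Finset W := Finset.univ.filter (fun y => ∃ u ∈ H, u ∉ Set.range f ∧ G.Adj (f y) u) with hY
  set AW : Finset W := Finset.univ.filter (fun w => f w ∈ A) with hAW
  -- counting
  have hcount : Yᶜ.card + AWᶜ.card ≤ j := by
    have h1 : Yᶜ ⊆ AW.filter (fun w => ¬ G.Adj v (f w)) := by
      intro w hw
      rw [Finset.mem_compl, hY, Finset.mem_filter] at hw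
      push Not at hw
      have hw := hw (Finset.mem_univ _)
      rw [Finset.mem_filter]
      refine ⟨?_, fun h => hw v hvH hvf h.symm⟩
      by_contra hn
      have hwU : f w ∈ U := by
        rw [hU, Finset.mem_sdiff]
        refine ⟨hfH w, fun h => hn (by simp [hAW, h])⟩
      have h2 := hUdeg _ hwU
      have h3 : (((Finset.univ.erase w).image f)).card < Fintype.card W := by
        refine lt_of_le_of_lt Finset.card_image_le ?_
        rw [Finset.card_erase_of_mem (Finset.mem_univ _), Finset.card_univ]
        have : 0 < Fintype.card W := Fintype.card_pos_iff.2 ⟨w⟩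
        omega
      obtain ⟨u, hu, hu'⟩ := Finset.exists_mem_notMem_of_card_lt_card (lt_of_lt_of_le h3 h2)
      rw [Finset.mem_filter] at hu
      refine hw u hu.1 ?_ hu.2
      rintro ⟨w', rfl⟩
      refine hu' (Finset.mem_image.2 ⟨w', Finset.mem_erase.2 ⟨?_, Finset.mem_univ _⟩, rfl⟩)
      rintro rfl
      exact G.loopless.irrefl _ hu.2
    have h2 : (H.filter (fun x => G.Adj v x)).card ≤ j + (AW.filter (fun w => G.Adj v (f w))).card := by
      have : H.filter (fun x => G.Adj v x) ⊆ U.filter (fun x => G.Adj v x) ∪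
          (AW.filter (fun w => G.Adj v (f w))).image f := by
        intro x hx
        rw [Finset.mem_filter] at hx
        rw [Finset.mem_union]
        by_cases hxA : x ∈ A
        · right
          obtain ⟨w, rfl⟩ := hAf f hf x hxA
          exact Finset.mem_image.2 ⟨w, by simp [hAW, hxA, hx.2], rfl⟩
        · left
          exact Finset.mem_filter.2 ⟨Finset.mem_sdiff.2 ⟨hx.1, hxA⟩, hx.2⟩
      refine (Finset.card_le_card this).trans ((Finset.card_union_le _ _).trans ?_)
      exact Nat.add_le_add_left Finset.card_image_le _
    have h3 := Finset.card_le_card h1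
    have h4 := hUdeg v hvU
    have h5 := Finset.card_filter_add_card_filter_not (s := AW) (fun w => G.Adj v (f w))
    have h6 := Finset.card_add_card_compl AW
    omega
  -- descendants
  set D : W → Finset W := fun x => Finset.univ.filter (fun z => ∃ n, par^[n] z = x) with hD
  have hDmem : ∀ x z, z ∈ D x ↔ ∃ n, par^[n] z = x := by intro x z; simp [hD]
  have hDself : ∀ x, x ∈ D x := fun x => (hDmem x x).2 ⟨0, rfl⟩
  have hDup : ∀ x z, par z ∈ D x → z ∈ D x := by
    intro x z h
    obtain ⟨n, hn⟩ := (hDmem _ _).1 h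
    exact (hDmem _ _).2 ⟨n + 1, by rw [Function.iterate_succ_apply]; exact hn⟩
  have hDpar : ∀ x z, z ∈ D x → z ≠ x → par z ∈ D x := by
    intro x z h hne
    obtain ⟨n, hn⟩ := (hDmem _ _).1 h
    cases n with
    | zero => exact absurd hn hne
    | succ n => exact (hDmem _ _).2 ⟨n, by rw [Function.iterate_succ_apply] at hn; exact hn⟩
  have hrkle : ∀ w, rk (par w) ≤ rk w := by
    intro w
    by_cases h : w = r
    · rw [h, hr]
    · exact (hrk w h).le
  have hDrk : ∀ x z, z ∈ D x → rk x ≤ rk z := by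
    intro x z h
    obtain ⟨n, rfl⟩ := (hDmem _ _).1 h
    clear h
    induction n generalizing z with
    | zero => exact le_rfl
    | succ n ih => rw [Function.iterate_succ_apply]; exact (ih (par z)).trans (hrkle z)
  have hDr : ∀ x, r ∈ D x → x = r := by
    intro x h
    obtain ⟨n, rfl⟩ := (hDmem _ _).1 h
    exact Function.iterate_fixed hr n
  have hDtrans : ∀ x z, z ∈ D x → D z ⊆ D x := by
    intro x z h u hu
    obtain ⟨n, rfl⟩ := (hDmem _ _).1 h
    obtain ⟨k, rfl⟩ := (hDmem _ _).1 hu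
    exact (hDmem _ _).2 ⟨n + k, by rw [Function.iterate_add_apply]⟩
  have hDall : ∀ z, z ∈ D r := by
    have : ∀ n z, rk z = n → z ∈ D r := by
      intro n
      induction n using Nat.strong_induction_on with
      | _ n ih =>
        intro z hz
        by_cases h : z = r
        · rw [h]; exact hDself r
        · exact hDup _ _ (ih _ (hz ▸ hrk z h) _ rfl)
    exact fun z => this _ z rfl
  -- choice of x
  set Good : Finset W := Finset.univ.filter
    (fun x => (∃ b ∈ D x, b ∈ AW) ∧ (x = r ∨ par x ∈ Y)) with hGood
  have hGne : Good.Nonempty := by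
    obtain ⟨w, hw⟩ := hAf f hf a haA
    refine ⟨r, ?_⟩
    simp only [hGood, Finset.mem_filter, Finset.mem_univ, true_and, true_or, and_true]
    exact ⟨w, hDall w, by simp [hAW, hw, haA]⟩
  obtain ⟨x, hx, hxmin⟩ := Finset.exists_min_image Good (fun x => (D x).card) hGne
  simp only [hGood, Finset.mem_filter, Finset.mem_univ, true_and] at hx hxmin
  obtain ⟨⟨b, hbX, hbA⟩, hxY⟩ := hx
  set X := D x with hX
  set Q : Finset W := X.filter (fun z => ∃ w, w ≠ r ∧ par w = z ∧ ∃ b ∈ D w, b ∈ AW) with hQ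
  have hQY : Q ⊆ Yᶜ := by
    intro z hz
    rw [hQ, Finset.mem_filter] at hz
    obtain ⟨hzX, w, hwr, rfl, hb⟩ := hz
    rw [Finset.mem_compl]
    intro hzY
    have h1 := hxmin w ⟨hb, Or.inr hzY⟩
    have h2 : D w ⊂ X := by
      refine ⟨hDtrans _ _ (hDup _ _ hzX), fun h => ?_⟩
      have h3 := hDrk _ _ (h (hDself x))
      have h4 := hDrk _ _ hzX
      have h5 := hrk w hwr
      omega
    have := Finset.card_lt_card h2
    omega
  set Xo : Finset W := X.filter (fun z => ∃ w, w ≠ r ∧ par w = z) with hXo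
  have hXoX : Xo ⊆ X := Finset.filter_subset _ _
  have hXocard : Xo.card ≤ Q.card + (X \ AW).card := by
    have h1 : (Xo \ Q).card ≤ (X \ AW).card := by
      have hch : ∀ z, ∃ w, z ∈ Xo → w ≠ r ∧ par w = z := by
        intro z
        by_cases h : z ∈ Xo
        · obtain ⟨w, hw⟩ := (Finset.mem_filter.1 h).2
          exact ⟨w, fun _ => hw⟩
        · exact ⟨z, fun h' => absurd h' h⟩
      choose ch hch using hch
      refine Finset.card_le_card_of_injOn ch ?_ ?_
      · intro z hz
        have hz := Finset.mem_sdiff.1 (Finset.mem_coe.1 hz)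
        obtain ⟨h1, h2⟩ := hch z hz.1
        rw [Finset.mem_coe, Finset.mem_sdiff]
        refine ⟨hDup _ _ (by rw [h2]; exact hXoX hz.1), fun h => hz.2 ?_⟩
        rw [hQ, Finset.mem_filter]
        exact ⟨hXoX hz.1, ch z, h1, h2, ch z, hDself _, h⟩
      · intro z hz z' hz' hzz
        have hz := Finset.mem_sdiff.1 (Finset.mem_coe.1 hz)
        have hz' := Finset.mem_sdiff.1 (Finset.mem_coe.1 hz')
        rw [← (hch z hz.1).2, ← (hch z' hz'.1).2, hzz]
    have := Finset.card_le_card_sdiff_add_card (s := Xo) (t := Q)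
    omega
  have hmain : (Xᶜ \ AW).card + Xo.card ≤ j := by
    have h1 := Finset.card_le_card hQY
    have h2 : (Xᶜ \ AW).card + (X \ AW).card = AWᶜ.card := by
      rw [← Finset.card_union_of_disjoint]
      · congr 1; ext w; simp only [Finset.mem_union, Finset.mem_sdiff, Finset.mem_compl]; tauto
      · rw [Finset.disjoint_left]; intro w; simp only [Finset.mem_sdiff, Finset.mem_compl]; tauto
    omega
  -- start vertex
  obtain ⟨v', hv'H, hv'f, hv'adj⟩ : ∃ v' ∈ H, v' ∉ Set.range f ∧ (x ≠ r → G.Adj (f (par x)) v') := by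
    rcases hxY with h | h
    · exact ⟨v, hvH, hvf, fun h' => absurd h h'⟩
    · rw [hY, Finset.mem_filter] at h
      obtain ⟨_, u, h1, h2, h3⟩ := h
      exact ⟨u, h1, h2, fun _ => h3⟩
  have hv'U := houtU v' hv'H hv'f
  have hxX : x ∈ X := hDself x
  set f1 := Function.update f x v' with hf1
  have hf1x : f1 x = v' := Function.update_self _ _ _
  have hf1o : ∀ w, w ∉ X → f1 w = f w := fun w hw =>
    Function.update_of_ne (by rintro rfl; exact hw hxX) _ _
  set S0 : Finset W := insert x Xᶜ with hS0
  have hS0i : Set.InjOn f1 S0 := by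
    rw [hS0, Finset.coe_insert, Set.injOn_insert (by simpa using hxX)]
    refine ⟨?_, ?_⟩
    · intro p hp q hq hpq
      rw [hf1o p (by simpa using hp), hf1o q (by simpa using hq)] at hpq
      exact hfi hpq
    · rintro ⟨w, hw, hw'⟩
      rw [hf1o w (by simpa using hw), hf1x] at hw'
      exact hv'f ⟨w, hw'⟩
  have hzr : ∀ z ∈ X, z ≠ x → z ≠ r := by
    rintro z hz hzx rfl
    exact hzx (hDr _ hz).symm
  have hparXo : ∀ z ∈ X, z ≠ x → par z ∈ Xo := by
    intro z hz hzx
    rw [hXo, Finset.mem_filter]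
    exact ⟨hDpar _ _ hz hzx, z, hzr z hz hzx, rfl⟩
  have hnotS0 : ∀ z, z ∉ S0 ↔ z ∈ X ∧ z ≠ x := by
    intro z; rw [hS0, Finset.mem_insert, Finset.mem_compl]; tauto
  -- phase 1
  obtain ⟨g, hg0, hgi, hg⟩ := greedyExt G par r rk hrk (fun _ u => u ∈ U) S0 (S0 ∪ Xo) f1
    (by
      intro w _ hw0
      obtain ⟨h1, h2⟩ := (hnotS0 w).1 hw0
      exact ⟨hzr w h1 h2, Finset.mem_union_right _ (hparXo w h1 h2)⟩) hS0i
    (by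
      intro S hS0S hSS1 g hg hgi hP z hz1 hzS hpz
      have hz0 : z ∉ S0 := fun h => hzS (hS0S h)
      obtain ⟨hzX, hzx⟩ := (hnotS0 z).1 hz0
      have hzXo : z ∈ Xo := (Finset.mem_union.1 hz1).resolve_left hz0
      have hpX := hDpar _ _ hzX hzx
      have hpU : g (par z) ∈ U := by
        by_cases h : par z = x
        · rw [h, hg x (Finset.mem_insert_self _ _), hf1x]; exact hv'U
        · exact hP _ hpz ((hnotS0 _).2 ⟨hpX, h⟩)
      have hd := hvmin _ hpU
      set E : Finset V := (Xᶜ \ AW).image f ∪ (((insert x Xo).erase z).erase (par z)).image g with hE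
      have hEc : E.card < j := by
        have h1 : E.card ≤ (Xᶜ \ AW).card + (((insert x Xo).erase z).erase (par z)).card :=
          (Finset.card_union_le _ _).trans (Nat.add_le_add Finset.card_image_le Finset.card_image_le)
        have h2 : par z ∈ (insert x Xo).erase z := by
          rw [Finset.mem_erase]
          refine ⟨fun h => hzS (h ▸ hpz), Finset.mem_insert_of_mem (hparXo z hzX hzx)⟩
        have h3 := Finset.card_erase_add_one h2
        have h4 := Finset.card_erase_add_one (Finset.mem_insert_of_mem hzXo : z ∈ insert x Xo)
        have h5 := Finset.card_insert_le x Xo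
        omega
      obtain ⟨u, hu, huE⟩ := Finset.exists_mem_notMem_of_card_lt_card (lt_of_lt_of_le hEc hd)
      rw [Finset.mem_filter] at hu
      refine ⟨u, hu.1, hu.2, fun h => huE ?_⟩
      obtain ⟨w, hw, rfl⟩ := Finset.mem_image.1 h
      rw [hE, Finset.mem_union]
      by_cases hwX : w ∈ X
      · right
        refine Finset.mem_image.2 ⟨w, ?_, rfl⟩
        rw [Finset.mem_erase, Finset.mem_erase, Finset.mem_insert]
        refine ⟨?_, fun h => hzS (h ▸ hw), ?_⟩
        · rintro rfl; exact G.loopless.irrefl _ hu.2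
        · have := hSS1 hw
          rw [Finset.mem_union, hS0, Finset.mem_insert, Finset.mem_compl] at this
          tauto
      · left
        have hwg : g w = f w := by
          rw [hg w (Finset.mem_insert_of_mem (by simpa using hwX)), hf1o w hwX]
        rw [hwg]
        refine Finset.mem_image.2 ⟨w, ?_, rfl⟩
        rw [Finset.mem_sdiff, Finset.mem_compl]
        refine ⟨hwX, fun h => ?_⟩
        have h6 : f w ∈ A := by simpa [hAW] using h
        rw [hwg, hU, Finset.mem_sdiff] at hu
        exact hu.1.2 h6) Finset.subset_union_left
  have hfbA : f b ∈ A := by simpa [hAW] using hbA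
  have hXoU : ∀ w ∈ Xo, g w ∈ U := by
    intro w hw
    by_cases h : w = x
    · rw [h, hg0 x (Finset.mem_insert_self _ _), hf1x]; exact hv'U
    · exact (hg w (Finset.mem_union_right _ hw) ((hnotS0 w).2 ⟨hXoX hw, h⟩)).1
  -- phase 2
  obtain ⟨h, hh0, hhi, hh⟩ := greedyExt G par r rk hrk (fun _ u => u ∈ H ∧ u ≠ f b) (S0 ∪ Xo)
    Finset.univ g
    (by
      intro w _ hw
      rw [Finset.mem_union, not_or] at hw
      obtain ⟨h1, h2⟩ := (hnotS0 w).1 hw.1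
      exact ⟨hzr w h1 h2, Finset.mem_univ _⟩) hgi
    (by
      intro S hS0S _ k hk hki hP z _ hzS hpz
      have hz1 : z ∉ S0 ∪ Xo := fun h => hzS (hS0S h)
      have hz0 : z ∉ S0 := fun h => hz1 (Finset.mem_union_left _ h)
      obtain ⟨hzX, hzx⟩ := (hnotS0 z).1 hz0
      have hpXo := hparXo z hzX hzx
      have hpU : k (par z) ∈ U := by
        rw [hk _ (Finset.mem_union_right _ hpXo)]; exact hXoU _ hpXo
      have hd := hUdeg _ hpU
      have hEc : (insert (f b) ((S.erase (par z)).image k)).card < Fintype.card W := by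
        have h1 := Finset.card_insert_le (f b) ((S.erase (par z)).image k)
        have h2 := Finset.card_image_le (s := S.erase (par z)) (f := k)
        have h3 := Finset.card_erase_add_one hpz
        have h4 : S.card < Fintype.card W := by
          rw [← Finset.card_univ]
          exact Finset.card_lt_card ⟨Finset.subset_univ _, fun h => hzS (h (Finset.mem_univ _))⟩
        omega
      obtain ⟨u, hu, huE⟩ := Finset.exists_mem_notMem_of_card_lt_card (lt_of_lt_of_le hEc hd)
      rw [Finset.mem_filter] at hu
      rw [Finset.mem_insert, not_or] at huE
      refine ⟨u, ⟨hu.1, huE.1⟩, hu.2, fun h => huE.2 ?_⟩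
      obtain ⟨w, hw, rfl⟩ := Finset.mem_image.1 h
      refine Finset.mem_image.2 ⟨w, Finset.mem_erase.2 ⟨?_, hw⟩, rfl⟩
      rintro rfl
      exact G.loopless.irrefl _ hu.2) (Finset.subset_univ _)
  have hho : ∀ w, w ∉ X → h w = f w := by
    intro w hw
    have : w ∈ S0 := Finset.mem_insert_of_mem (by simpa using hw)
    rw [hh0 w (Finset.mem_union_left _ this), hg0 w this, hf1o w hw]
  have hhx : h x = v' := by
    have : x ∈ S0 := Finset.mem_insert_self _ _
    rw [hh0 x (Finset.mem_union_left _ this), hg0 x this, hf1x]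
  have hhXo : ∀ w ∈ Xo, h w = g w := fun w hw => hh0 w (Finset.mem_union_right _ hw)
  have key : ∀ w, h w ∈ H ∧ h w ≠ f b ∧ (w ≠ r → G.Adj (h (par w)) (h w)) := by
    intro w
    by_cases hwX : w ∈ X
    · by_cases hwx : w = x
      · subst hwx
        rw [hhx]
        refine ⟨hv'H, fun h => hv'f ⟨b, h.symm⟩, fun hwr => ?_⟩
        rw [hho]
        · exact hv'adj hwr
        · intro hp
          have h1 := hDrk _ _ hp
          have h2 := hrk w hwr
          omega
      · have hp := hparXo w hwX hwx
        by_cases hwo : w ∈ Xo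
        · obtain ⟨h1, h2⟩ := hg w (Finset.mem_union_right _ hwo) ((hnotS0 w).2 ⟨hwX, hwx⟩)
          rw [hhXo w hwo, hhXo _ hp]
          rw [hU, Finset.mem_sdiff] at h1
          exact ⟨h1.1, fun h => h1.2 (h ▸ hfbA), fun _ => h2⟩
        · obtain ⟨⟨h1, h2⟩, h3⟩ := hh w (Finset.mem_univ _) (by
            rw [Finset.mem_union, not_or]; exact ⟨(hnotS0 w).2 ⟨hwX, hwx⟩, hwo⟩)
          exact ⟨h1, h2, fun _ => h3⟩
    · rw [hho w hwX]
      refine ⟨hfH w, fun h => hwX (hfi h ▸ hbX), fun hwr => ?_⟩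
      rw [hho]
      · exact hfe w hwr
      · exact fun hp => hwX (hDup _ _ hp)
  have hcopy : IsCopy G par r H h :=
    ⟨fun p q hpq => hhi (by simp) (by simp) hpq, fun w hw => (key w).2.2 hw, fun w => (key w).1⟩
  obtain ⟨w, hw⟩ := hAf h hcopy _ hfbA
  exact (key w).2.1 hw

theorem treeParam {W : Type*} (T : SimpleGraph W) (hT : T.IsTree) :
    ∃ (r : W) (par : W → W) (rk : W → ℕ), par r = r ∧ (∀ w, w ≠ r → rk (par w) < rk w) ∧
      ∀ a b, T.Adj a b → (a ≠ r ∧ par a = b) ∨ (b ≠ r ∧ par b = a) := by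
  classical
  obtain ⟨r⟩ := hT.connected.nonempty
  choose f hf hf' using (hT.existsUnique_path · r)
  have hr : f r = SimpleGraph.Walk.nil := (hf' r _ SimpleGraph.Walk.IsPath.nil).symm
  refine ⟨r, fun w => (f w).snd, fun w => (f w).length, ?_, ?_, ?_⟩
  · simp [hr]
  · intro w hw
    have hn : ¬ (f w).Nil := SimpleGraph.Walk.not_nil_of_ne hw
    have h1 := hf' _ _ (hf w).tail
    have h2 := SimpleGraph.Walk.length_tail_add_one hn
    rw [h1] at h2
    change (f ((f w).snd)).length < (f w).length
    omega
  · intro a b hab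
    by_cases h : b ∈ (f a).support
    · left
      refine ⟨?_, (hT.isAcyclic.eq_snd_of_adj_start (hf a) hab h).symm⟩
      rintro rfl
      rw [hr] at h
      simp at h
      exact hab.ne h.symm
    · right
      have h1 := hf' b _ ((hf a).cons (h := hab.symm) h)
      refine ⟨?_, ?_⟩
      · rintro rfl
        exact h (SimpleGraph.Walk.end_mem_support _)
      · simp only [← h1, SimpleGraph.Walk.snd_cons]

/-- `B` induces an edge or a 2-connected graph -/
def Good2 {V : Type*} (G : SimpleGraph V) (B : Finset V) : Prop :=
  2 ≤ B.card ∧ ∀ x, (G.induce ((B : Set V) \ {x})).Connected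

def IsEar {V : Type*} (G : SimpleGraph V) (B : Finset V) (l : ℕ) (p : ℕ → V) : Prop :=
  1 ≤ l ∧ p 0 ∈ B ∧ p (l + 1) ∈ B ∧ p 0 ≠ p (l + 1) ∧ (∀ i, 1 ≤ i → i ≤ l → p i ∉ B) ∧
    ∀ i, i ≤ l → G.Adj (p i) (p (i + 1))

theorem IsEar.rev {V : Type*} {G : SimpleGraph V} {B : Finset V} {l : ℕ} {p : ℕ → V}
    (h : IsEar G B l p) : IsEar G B l (fun i => p (l + 1 - i)) := by
  obtain ⟨h1, h2, h3, h4, h5, h6⟩ := h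
  refine ⟨h1, h3, by simpa using h2, by simpa using h4.symm, ?_, ?_⟩
  · intro i hi hi'; exact h5 _ (by omega) (by omega)
  · intro i hi
    have := h6 (l - i) (by omega)
    have e1 : l + 1 - i = l - i + 1 := by omega
    have e2 : l + 1 - (i + 1) = l - i := by omega
    simp only [e1, e2]
    exact this.symm

theorem chainConn {V : Type*} (G : SimpleGraph V) (S : Set V) (hS : (G.induce S).Connected)
    (q : ℕ → V) (n : ℕ) (h0 : q 0 ∈ S) (hq : ∀ i, i < n → G.Adj (q i) (q (i + 1))) :
    (G.induce (S ∪ {v | ∃ i, 1 ≤ i ∧ i ≤ n ∧ q i = v})).Connected := by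
  induction n with
  | zero =>
    have : S ∪ {v | ∃ i, 1 ≤ i ∧ i ≤ 0 ∧ q i = v} = S := by
      ext v; simp only [Set.mem_union, Set.mem_ofPred_eq]
      constructor
      · rintro (h | ⟨i, h1, h2, _⟩)
        · exact h
        · omega
      · exact Or.inl
    rw [this]; exact hS
  | succ n ih =>
    have ih := ih (fun i hi => hq i (by omega))
    have hn : q n ∈ S ∪ {v | ∃ i, 1 ≤ i ∧ i ≤ n ∧ q i = v} := by
      rcases Nat.eq_zero_or_pos n with h | h
      · left; rw [h]; exact h0
      · right; exact ⟨n, h, le_rfl, rfl⟩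
    have h2 := SimpleGraph.connected_induce_union (G := G) (t := {q (n + 1)}) ih.preconnected
      (SimpleGraph.Preconnected.of_subsingleton) hn rfl (hq n (by omega))
    refine (congrArg (fun s : Set V => (G.induce s).Connected) ?_).mpr h2
    ext v; simp only [Set.mem_union, Set.mem_ofPred_eq, Set.mem_singleton_iff]
    constructor
    · rintro (h | ⟨i, h1, h2, h3⟩)
      · exact Or.inl (Or.inl h)
      · by_cases hi : i = n + 1
        · right; rw [← h3, hi]
        · exact Or.inl (Or.inr ⟨i, h1, by omega, h3⟩)
    · rintro ((h | ⟨i, h1, h2, h3⟩) | h)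
      · exact Or.inl h
      · exact Or.inr ⟨i, h1, by omega, h3⟩
      · exact Or.inr ⟨n + 1, by omega, le_rfl, h.symm⟩

open Classical in
theorem goodEar {V : Type*} (G : SimpleGraph V) (B : Finset V) (hB : Good2 G B) (l : ℕ) (p : ℕ → V)
    (hp : IsEar G B l p) (hinj : ∀ i k, 1 ≤ i → i < k → k ≤ l → p i ≠ p k) :
    Good2 G (B ∪ (Finset.Icc 1 l).image p) := by
  refine ⟨hB.1.trans (Finset.card_le_card Finset.subset_union_left), ?_⟩
  intro x
  have hrev := hp.rev
  obtain ⟨h1, h2, h3, h4, h5, h6⟩ := hp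
  obtain ⟨-, -, -, -, -, r6⟩ := hrev
  by_cases hx : ∃ k, 1 ≤ k ∧ k ≤ l ∧ p k = x
  · obtain ⟨k, hk1, hk2, rfl⟩ := hx
    have hkB := h5 k hk1 hk2
    have c1 := chainConn G _ (hB.2 (p k)) p (k - 1) ⟨h2, by rintro h; rw [Set.mem_singleton_iff] at h; exact hkB (h ▸ h2)⟩
      (fun i hi => h6 i (by omega))
    have c2 := chainConn G _ c1 (fun i => p (l + 1 - i)) (l - k)
      (Or.inl ⟨h3, by rintro h; rw [Set.mem_singleton_iff] at h; exact hkB (h ▸ h3)⟩) (fun i hi => r6 i (by omega))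
    refine (congrArg (fun s : Set V => (G.induce s).Connected) ?_).mpr c2
    ext v
    simp only [Finset.coe_union, Finset.coe_image, Finset.coe_Icc, Set.mem_sdiff, Set.mem_union, Set.mem_image, Set.mem_Icc,
      Set.mem_singleton_iff, Set.mem_ofPred_eq, Finset.mem_coe]
    constructor
    · rintro ⟨hv | ⟨i, ⟨hi1, hi2⟩, rfl⟩, hv'⟩
      · exact Or.inl (Or.inl ⟨hv, hv'⟩)
      · rcases lt_trichotomy i k with h | h | h
        · exact Or.inl (Or.inr ⟨i, hi1, by omega, rfl⟩)
        · exact absurd (by rw [h]) hv'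
        · exact Or.inr ⟨l + 1 - i, by omega, by omega, by congr 1; omega⟩
    · rintro ((⟨hv, hv'⟩ | ⟨i, hi1, hi2, rfl⟩) | ⟨i, hi1, hi2, rfl⟩)
      · exact ⟨Or.inl hv, hv'⟩
      · exact ⟨Or.inr ⟨i, ⟨hi1, by omega⟩, rfl⟩, hinj i k hi1 (by omega) hk2⟩
      · exact ⟨Or.inr ⟨l + 1 - i, ⟨by omega, by omega⟩, rfl⟩,
          (hinj k (l + 1 - i) hk1 (by omega) (by omega)).symm⟩
  · push Not at hx
    by_cases h0 : p 0 = x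
    · have c2 := chainConn G _ (hB.2 x) (fun i => p (l + 1 - i)) l
        ⟨h3, fun h => h4 (h0.trans h.symm)⟩ (fun i hi => r6 i (by omega))
      refine (congrArg (fun s : Set V => (G.induce s).Connected) ?_).mpr c2
      ext v
      simp only [Finset.coe_union, Finset.coe_image, Finset.coe_Icc, Set.mem_sdiff, Set.mem_union, Set.mem_image, Set.mem_Icc,
        Set.mem_singleton_iff, Set.mem_ofPred_eq, Finset.mem_coe]
      constructor
      · rintro ⟨hv | ⟨i, ⟨hi1, hi2⟩, rfl⟩, hv'⟩
        · exact Or.inl ⟨hv, hv'⟩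
        · exact Or.inr ⟨l + 1 - i, by omega, by omega, by congr 1; omega⟩
      · rintro (⟨hv, hv'⟩ | ⟨i, hi1, hi2, rfl⟩)
        · exact ⟨Or.inl hv, hv'⟩
        · exact ⟨Or.inr ⟨l + 1 - i, ⟨by omega, by omega⟩, rfl⟩, hx _ (by omega) (by omega)⟩
    · have c2 := chainConn G _ (hB.2 x) p l ⟨h2, h0⟩ (fun i hi => h6 i (by omega))
      refine (congrArg (fun s : Set V => (G.induce s).Connected) ?_).mpr c2
      ext v
      simp only [Finset.coe_union, Finset.coe_image, Finset.coe_Icc, Set.mem_sdiff, Set.mem_union, Set.mem_image, Set.mem_Icc,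
        Set.mem_singleton_iff, Set.mem_ofPred_eq, Finset.mem_coe]
      constructor
      · rintro ⟨hv | ⟨i, ⟨hi1, hi2⟩, rfl⟩, hv'⟩
        · exact Or.inl ⟨hv, hv'⟩
        · exact Or.inr ⟨i, by omega, by omega, rfl⟩
      · rintro (⟨hv, hv'⟩ | ⟨i, hi1, hi2, rfl⟩)
        · exact ⟨Or.inl hv, hv'⟩
        · exact ⟨Or.inr ⟨i, ⟨by omega, by omega⟩, rfl⟩, hx _ (by omega) (by omega)⟩

open Classical in
theorem goodInsert {V : Type*} (G : SimpleGraph V) (B : Finset V) (hB : Good2 G B) (u : V) (hu : u ∉ B)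
    (h2 : 2 ≤ (B.filter (fun x => G.Adj u x)).card) : Good2 G (insert u B) := by
  obtain ⟨b, hb, b', hb', hne⟩ := Finset.one_lt_card.1 h2
  rw [Finset.mem_filter] at hb hb'
  have := goodEar G B hB 1 (fun n => if n = 0 then b else if n = 1 then u else b')
    ⟨le_rfl, by simpa using hb.1, by simpa using hb'.1, by simpa using hne, by
      intro i h1 h2
      obtain rfl : i = 1 := by omega
      simpa using hu, by
      intro i hi
      interval_cases i
      · simpa using hb.2.symm
      · simpa using hb'.2⟩ (by intros; omega)
  convert this using 1
  ext x; simp [or_comm]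

theorem spliceTwo {V : Type*} {G : SimpleGraph V} {B : Finset V} {l : ℕ} {p : ℕ → V}
    (h : IsEar G B l p) (u : V) (hu : u ∉ B) (i k : ℕ) (hik : i < k) (hk : k ≤ l + 1)
    (hi : G.Adj u (p i)) (hk' : G.Adj u (p k)) : ∃ q, IsEar G B (l + 2 + i - k) q := by
  obtain ⟨h1, h2, h3, h4, h5, h6⟩ := h
  refine ⟨fun n => if n ≤ i then p n else if n = i + 1 then u else p (n + k - (i + 2)),
    by omega, by simpa using h2, ?_, ?_, ?_, ?_⟩
  · beta_reduce; rw [if_neg (by omega), if_neg (by omega)]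
    convert h3 using 2; omega
  · beta_reduce; rw [if_pos (by omega), if_neg (by omega), if_neg (by omega)]
    convert h4 using 2; congr 1; omega
  · intro n hn hn'
    dsimp only
    split_ifs with c1 c2
    · exact h5 n hn (by omega)
    · exact hu
    · exact h5 _ (by omega) (by omega)
  · intro n hn
    rcases lt_trichotomy n i with c | c | c
    · beta_reduce; rw [if_pos (by omega), if_pos (by omega)]; exact h6 n (by omega)
    · beta_reduce; rw [if_pos (by omega), if_neg (by omega), if_pos (by omega), c]; exact hi.symm
    · beta_reduce; rw [if_neg (show ¬ n ≤ i by omega), if_neg (show ¬ n + 1 ≤ i by omega),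
        if_neg (show ¬ n + 1 = i + 1 by omega)]
      by_cases c' : n = i + 1
      · rw [if_pos c']
        convert hk' using 2; omega
      · rw [if_neg c']
        have := h6 (n + k - (i + 2)) (by omega)
        convert this using 2; omega

theorem spliceEnd {V : Type*} {G : SimpleGraph V} {B : Finset V} {l : ℕ} {p : ℕ → V}
    (h : IsEar G B l p) (u : V) (hu : u ∉ B) (i : ℕ) (hil : i ≤ l)
    (hi : G.Adj u (p i)) (b : V) (hb : b ∈ B) (hub : G.Adj u b) (hne : b ≠ p 0) :
    ∃ q, IsEar G B (i + 1) q := by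
  obtain ⟨h1, h2, h3, h4, h5, h6⟩ := h
  refine ⟨fun n => if n ≤ i then p n else if n = i + 1 then u else b,
    by omega, by simpa using h2, ?_, ?_, ?_, ?_⟩
  · beta_reduce; rw [if_neg (by omega), if_neg (by omega)]; exact hb
  · beta_reduce; rw [if_pos (by omega), if_neg (by omega), if_neg (by omega)]; exact hne.symm
  · intro n hn hn'
    dsimp only
    split_ifs with c1 c2
    · exact h5 n hn (by omega)
    · exact hu
    · omega
  · intro n hn
    rcases lt_trichotomy n i with c | c | c
    · beta_reduce; rw [if_pos (by omega), if_pos (by omega)]; exact h6 n (by omega)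
    · beta_reduce; rw [if_pos (by omega), if_neg (by omega), if_pos (by omega), c]; exact hi.symm
    · beta_reduce; rw [if_neg (show ¬ n ≤ i by omega), if_neg (show ¬ n + 1 ≤ i by omega),
        if_neg (show ¬ n + 1 = i + 1 by omega), if_pos (show n = i + 1 by omega)]; exact hub

/-- shortcut: join `p i` directly to `p k` -/
theorem shortcut {V : Type*} {G : SimpleGraph V} {B : Finset V} {l : ℕ} {p : ℕ → V}
    (h : IsEar G B l p) (i k : ℕ) (hi : 1 ≤ i) (hik : i < k) (hk : k ≤ l + 1)
    (hadj : G.Adj (p i) (p k)) : ∃ q, IsEar G B (l + 1 + i - k) q := by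
  obtain ⟨h1, h2, h3, h4, h5, h6⟩ := h
  refine ⟨fun n => if n ≤ i then p n else p (n + k - (i + 1)),
    by omega, by simpa using h2, ?_, ?_, ?_, ?_⟩
  · beta_reduce; rw [if_neg (by omega)]; convert h3 using 2; omega
  · beta_reduce; rw [if_pos (by omega), if_neg (by omega)]; convert h4 using 2; omega
  · intro n hn hn'
    dsimp only
    split_ifs with c1
    · exact h5 n hn (by omega)
    · exact h5 _ (by omega) (by omega)
  · intro n hn
    rcases lt_trichotomy n i with c | c | c
    · beta_reduce; rw [if_pos (by omega), if_pos (by omega)]; exact h6 n (by omega)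
    · beta_reduce; rw [if_pos (by omega), if_neg (by omega), c]
      convert hadj using 2; omega
    · beta_reduce; rw [if_neg (by omega), if_neg (by omega)]
      have := h6 (n + k - (i + 1)) (by omega)
      convert this using 2; omega

open Classical in
theorem earDeg {V : Type*} {G : SimpleGraph V} {B : Finset V} {l : ℕ} {p : ℕ → V}
    (h : IsEar G B l p) (hmin : ∀ l' q, IsEar G B l' q → l ≤ l') (u : V) (hu : u ∉ B)
    (hB1 : (B.filter (fun x => G.Adj u x)).card ≤ 1) :
    (B.filter (fun x => G.Adj u x)).card +
      (((Finset.Icc 1 l).image p).filter (fun x => G.Adj u x)).card ≤ 3 := by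
  have key : ∀ s n : ℕ, (∀ i, 1 ≤ i → i ≤ l → G.Adj u (p i) → s ≤ i ∧ i < s + n) →
      (((Finset.Icc 1 l).image p).filter (fun x => G.Adj u x)).card ≤ n := by
    intro s n hs
    have : ((Finset.Icc 1 l).image p).filter (fun x => G.Adj u x) ⊆ (Finset.Ico s (s + n)).image p := by
      intro x hx
      simp only [Finset.mem_filter, Finset.mem_image, Finset.mem_Icc] at hx
      obtain ⟨⟨i, ⟨h1, h2⟩, rfl⟩, h3⟩ := hx
      exact Finset.mem_image.2 ⟨i, Finset.mem_Ico.2 (hs i h1 h2 h3), rfl⟩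
    refine (Finset.card_le_card this).trans (Finset.card_image_le.trans ?_)
    simp
  by_cases hb : ∃ b ∈ B, G.Adj u b
  · obtain ⟨b, hb, hub⟩ := hb
    by_cases hb0 : b = p 0
    · have hb1 : b ≠ p (l + 1) := by rw [hb0]; exact h.2.2.2.1
      have := key 1 2 (by
        intro i h1 h2 h3
        obtain ⟨q, hq⟩ := spliceEnd h.rev u hu (l + 1 - i) (by omega)
          (by convert h3 using 2; omega) b hb hub (by simpa using hb1)
        have := hmin _ _ hq
        omega)
      omega
    · have := key (l - 1) 2 (by
        intro i h1 h2 h3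
        obtain ⟨q, hq⟩ := spliceEnd h u hu i h2 h3 b hb hub hb0
        have := hmin _ _ hq
        omega)
      omega
  · have hB0 : (B.filter (fun x => G.Adj u x)).card = 0 := by
      rw [Finset.card_eq_zero, Finset.filter_eq_empty_iff]
      intro x hx hx'; exact hb ⟨x, hx, hx'⟩
    rw [hB0, zero_add]
    by_cases he : ∃ i, 1 ≤ i ∧ i ≤ l ∧ G.Adj u (p i)
    · have hs := Nat.find_spec he
      refine key (Nat.find he) 3 ?_
      intro i h1 h2 h3
      have hle := Nat.find_min' he ⟨h1, h2, h3⟩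
      refine ⟨hle, ?_⟩
      rcases hle.lt_or_eq with hlt | heq
      · obtain ⟨q, hq⟩ := spliceTwo h u hu _ i hlt (by omega) hs.2.2 h3
        have := hmin _ _ hq
        omega
      · omega
    · exact (key 0 0 (fun i h1 h2 h3 => absurd ⟨i, h1, h2, h3⟩ he)).trans (by omega)

theorem earInj {V : Type*} {G : SimpleGraph V} {B : Finset V} {l : ℕ} {p : ℕ → V}
    (h : IsEar G B l p) (hmin : ∀ l' q, IsEar G B l' q → l ≤ l') (i k : ℕ) (hi : 1 ≤ i) (hik : i < k)
    (hk : k ≤ l) : p i ≠ p k := by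
  intro heq
  obtain ⟨q, hq⟩ := shortcut h i (k + 1) hi (by omega) (by omega) (by rw [heq]; exact h.2.2.2.2.2 k hk)
  have := hmin _ _ hq
  omega

theorem cutEdge {V : Type*} (G : SimpleGraph V) (S : Set V) (hS : (G.induce S).Connected) (Z : Set V)
    (s t : V) (hs : s ∈ S) (hsZ : s ∈ Z) (ht : t ∈ S) (htZ : t ∉ Z) :
    ∃ a b, a ∈ S ∧ a ∈ Z ∧ b ∈ S ∧ b ∉ Z ∧ G.Adj a b := by
  obtain ⟨w⟩ := hS.preconnected ⟨s, hs⟩ ⟨t, ht⟩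
  obtain ⟨d, _, h1, h2⟩ := w.exists_boundary_dart (Subtype.val ⁻¹' Z) hsZ htZ
  exact ⟨d.fst, d.snd, d.fst.2, h1, d.snd.2, h2, d.adj⟩

theorem earExists {V : Type*} (G : SimpleGraph V) (B : Finset V)
    (h0 : (G.induce (Set.univ : Set V)).Connected) (h1 : ∀ x, (G.induce ({x}ᶜ : Set V)).Connected)
    (hB : 2 ≤ B.card) (h : V) (hh : h ∉ B) : ∃ l p, IsEar G B l p := by
  classical
  set Hs : Set V := (B : Set V)ᶜ with hHs
  set C : Set V := {c | ∃ hc : c ∈ Hs, (G.induce Hs).Reachable ⟨h, hh⟩ ⟨c, hc⟩} with hC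
  have hhC : h ∈ C := ⟨hh, SimpleGraph.Reachable.refl _⟩
  have hCB : ∀ c ∈ C, c ∉ B := fun c ⟨hc, _⟩ => hc
  have hout : ∀ c b, c ∈ C → b ∉ C → G.Adj c b → b ∈ B := by
    rintro c b ⟨hc, hr⟩ hb hadj
    by_contra hn
    refine hb ⟨hn, hr.trans (SimpleGraph.Adj.reachable ?_)⟩
    exact hadj
  obtain ⟨b0, hb0⟩ : B.Nonempty := by rw [← Finset.card_pos]; omega
  obtain ⟨c, b, -, hc, -, hb, hcb⟩ := cutEdge G _ h0 C h b0 (Set.mem_univ _) hhC (Set.mem_univ _)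
    (fun h => hCB _ h hb0)
  have hbB := hout c b hc hb hcb
  obtain ⟨b1, hb1, hb1ne⟩ := Finset.exists_mem_ne (by omega : 1 < B.card) b
  obtain ⟨c', b', -, hc', hb'x, hb', hcb'⟩ := cutEdge G _ (h1 b) C h b1
    (fun e => hh (by rw [Set.mem_singleton_iff] at e; rw [e]; exact hbB)) hhC hb1ne (fun h => hCB _ h hb1)
  have hb'B := hout c' b' hc' hb' hcb'
  obtain ⟨hcH, hcr⟩ := hc
  obtain ⟨hcH', hcr'⟩ := hc'
  obtain ⟨w⟩ := hcr.symm.trans hcr'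
  refine ⟨w.length + 1, fun n => if n = 0 then b else if n ≤ w.length + 1 then (w.getVert (n - 1) : V) else b',
    by omega, by simpa using hbB, ?_, ?_, ?_, ?_⟩
  · beta_reduce; rw [if_neg (by omega), if_neg (by omega)]; exact hb'B
  · beta_reduce; rw [if_pos rfl, if_neg (by omega), if_neg (by omega)]; exact fun e => hb'x e.symm
  · intro i hi hi'
    dsimp only
    rw [if_neg (by omega), if_pos hi']
    exact (w.getVert (i - 1)).2
  · intro i hi
    rcases Nat.eq_zero_or_pos i with h | h
    · subst h
      simp only [if_true, Nat.zero_add, one_ne_zero, if_false, Nat.sub_self, SimpleGraph.Walk.getVert_zero]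
      rw [if_pos (by omega)]
      exact hcb.symm
    · beta_reduce; rw [if_neg (by omega), if_pos hi, if_neg (by omega)]
      by_cases e : i = w.length + 1
      · beta_reduce; rw [if_neg (by omega), e]
        simpa using hcb'
      · beta_reduce; rw [if_pos (by omega)]
        have := w.adj_getVert_succ (i := i - 1) (by omega)
        have e1 : i + 1 - 1 = i - 1 + 1 := by omega
        rw [e1]
        exact this

open Classical in
theorem splitDeg {V : Type*} [Fintype V] (G : SimpleGraph V) (v : V) (S : Finset V) :
    (Finset.univ.filter (fun x => G.Adj v x)).card ≤
      (S.filter (fun x => G.Adj v x)).card + (Sᶜ.filter (fun x => G.Adj v x)).card := by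
  have : (Finset.univ : Finset V) = S ∪ Sᶜ := by simp
  rw [this, Finset.filter_union]
  exact Finset.card_union_le _ _

open Classical in
theorem mainAux {V W : Type*} [Fintype V] [Fintype W] (G : SimpleGraph V)
    (par : W → W) (r : W) (rk : W → ℕ) (hrk : ∀ w, w ≠ r → rk (par w) < rk w) (hr : par r = r)
    (h0 : (G.induce (Set.univ : Set V)).Connected) (h1 : ∀ x, (G.induce ({x}ᶜ : Set V)).Connected)
    (hD : ∀ v, Fintype.card W + 2 ≤ (Finset.univ.filter (fun x => G.Adj v x)).card) (v0 : V) :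
    ∃ (B : Finset V) (f : W → V), Good2 G B ∧ IsCopy G par r Bᶜ f ∧ Bᶜ.card = Fintype.card W := by
  haveI : Nonempty V := ⟨v0⟩
  have hm : 0 < Fintype.card W := Fintype.card_pos_iff.2 ⟨r⟩
  set F : Finset (Finset V) :=
    Finset.univ.filter (fun B => Good2 G B ∧ ∃ f, IsCopy G par r Bᶜ f) with hF
  have hFne : F.Nonempty := by
    obtain ⟨v1, hv1⟩ : (Finset.univ.filter (fun x => G.Adj v0 x)).Nonempty := by
      rw [← Finset.card_pos]; have := hD v0; omega
    have hadj : G.Adj v0 v1 := (Finset.mem_filter.1 hv1).2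
    have hc2 : ({v0, v1} : Finset V).card = 2 := Finset.card_pair hadj.ne
    refine ⟨{v0, v1}, Finset.mem_filter.2 ⟨Finset.mem_univ _, ⟨hc2.ge, ?_⟩, ?_⟩⟩
    · intro x
      by_cases hx0 : x = v0
      · subst hx0
        have : (((({x, v1} : Finset V)) : Set V) \ {x}) = {v1} := by
          ext y; simp only [Finset.coe_insert, Finset.coe_singleton, Set.mem_sdiff, Set.mem_insert_iff,
            Set.mem_singleton_iff]
          constructor
          · rintro ⟨h | h, h'⟩
            · exact absurd h h'
            · exact h
          · rintro rfl; exact ⟨Or.inr rfl, hadj.ne'⟩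
        rw [this]
        exact SimpleGraph.Connected.of_subsingleton
      · by_cases hx1 : x = v1
        · subst hx1
          have : (((({v0, x} : Finset V)) : Set V) \ {x}) = {v0} := by
            ext y; simp only [Finset.coe_insert, Finset.coe_singleton, Set.mem_sdiff, Set.mem_insert_iff,
              Set.mem_singleton_iff]
            constructor
            · rintro ⟨h | h, h'⟩
              · exact h
              · exact absurd h h'
            · rintro rfl; exact ⟨Or.inl rfl, hadj.ne⟩
          rw [this]
          exact SimpleGraph.Connected.of_subsingleton
        · have : (((({v0, v1} : Finset V)) : Set V) \ {x}) = {v0, v1} := by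
            ext y; simp only [Finset.coe_insert, Finset.coe_singleton, Set.mem_sdiff, Set.mem_insert_iff,
              Set.mem_singleton_iff]
            constructor
            · exact fun h => h.1
            · intro h
              refine ⟨h, ?_⟩
              rintro rfl
              rcases h with h | h
              · exact hx0 h
              · exact hx1 h
          rw [this]
          exact SimpleGraph.induce_pair_connected_of_adj hadj
    · have hd : ∀ u, Fintype.card W ≤ ((({v0, v1} : Finset V)ᶜ).filter (fun x => G.Adj u x)).card := by
        intro u
        have a1 := splitDeg G u {v0, v1}
        have a2 := hD u
        have a3 : ((({v0, v1} : Finset V)).filter (fun x => G.Adj u x)).card ≤ 2 :=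
          (Finset.card_filter_le _ _).trans hc2.le
        omega
      refine minDegCopy G par r rk hrk _ ?_ (fun u _ => (hd u).trans (by omega))
      have := hd v0
      rw [← Finset.card_pos]
      exact lt_of_lt_of_le (lt_of_lt_of_le hm this) (Finset.card_filter_le _ _)
  obtain ⟨B, hBF, hBmax⟩ := Finset.exists_max_image F Finset.card hFne
  obtain ⟨-, hB, f, hf⟩ := Finset.mem_filter.1 hBF
  have hmax : ∀ B' : Finset V, Good2 G B' → (∃ f, IsCopy G par r B'ᶜ f) → B'.card ≤ B.card :=
    fun B' h h' => hBmax B' (Finset.mem_filter.2 ⟨Finset.mem_univ _, h, h'⟩)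
  have hle : Fintype.card W ≤ Bᶜ.card := by
    rw [← Finset.card_univ, ← Finset.card_image_of_injective Finset.univ hf.1]
    apply Finset.card_le_card
    intro x hx
    obtain ⟨w, -, rfl⟩ := Finset.mem_image.1 hx
    exact hf.2.2 w
  rcases hle.eq_or_lt with heq | hlt
  · exact ⟨B, f, hB, hf, heq.symm⟩
  exfalso
  have hins : ∀ u, u ∉ B → (∃ f, IsCopy G par r Bᶜ f ∧ u ∉ Set.range f) →
      (B.filter (fun x => G.Adj u x)).card ≤ 1 := by
    rintro u hu ⟨g, hg, hug⟩
    by_contra hcon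
    have := hmax _ (goodInsert G B hB u hu (by omega)) ⟨g, hg.1, hg.2.1, fun w => by
      rw [Finset.mem_compl, Finset.mem_insert, not_or]
      exact ⟨fun e => hug ⟨w, e⟩, Finset.mem_compl.1 (hg.2.2 w)⟩⟩
    rw [Finset.card_insert_of_notMem hu] at this
    omega
  have hB1 : ∀ u, u ∉ B → (B.filter (fun x => G.Adj u x)).card ≤ 1 := by
    intro u hu
    refine hins u hu (localLemma G par r rk hrk hr Bᶜ hlt ⟨f, hf⟩ ?_ u)
    intro w hw hw'
    have a1 := hins w (Finset.mem_compl.1 hw) hw'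
    have a2 := splitDeg G w B
    have a3 := hD w
    omega
  have hear : ∃ l, ∃ p, IsEar G B l p :=
    earExists G B h0 h1 hB.1 (f r) (Finset.mem_compl.1 (hf.2.2 r))
  obtain ⟨p, hp⟩ := Nat.find_spec hear
  have hmin : ∀ l' q, IsEar G B l' q → Nat.find hear ≤ l' := fun l' q hq => Nat.find_min' hear ⟨q, hq⟩
  generalize Nat.find hear = l at hp hmin
  set P := (Finset.Icc 1 l).image p with hP
  have hgood := goodEar G B hB l p hp (earInj hp hmin)
  rw [← hP] at hgood
  have hl := hp.1
  have hp1 : p 1 ∉ B := hp.2.2.2.2.1 1 le_rfl hl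
  have hp1P : p 1 ∈ P := Finset.mem_image.2 ⟨1, Finset.mem_Icc.2 ⟨le_rfl, hl⟩, rfl⟩
  have hunion : ∀ u, ((B ∪ P).filter (fun x => G.Adj u x)).card ≤
      (B.filter (fun x => G.Adj u x)).card + (P.filter (fun x => G.Adj u x)).card := by
    intro u; rw [Finset.filter_union]; exact Finset.card_union_le _ _
  have hcopy : ∃ f, IsCopy G par r (B ∪ P)ᶜ f := by
    refine minDegCopy G par r rk hrk _ ?_ ?_
    · have b1 := hB1 _ hp1
      have b2 : (P.filter (fun x => G.Adj (p 1) x)).card ≤ 1 := by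
        rw [Finset.card_le_one_iff_subset_singleton]
        refine ⟨p 2, ?_⟩
        intro x hx
        obtain ⟨hxP, hx⟩ := Finset.mem_filter.1 hx
        obtain ⟨k, hk, rfl⟩ := Finset.mem_image.1 hxP
        rw [Finset.mem_Icc] at hk
        rw [Finset.mem_singleton]
        by_cases hk1 : k = 1
        · subst hk1; exact absurd hx (G.irrefl)
        by_cases hk2 : k = 2
        · rw [hk2]
        obtain ⟨q, hq⟩ := shortcut hp 1 k le_rfl (by omega) (by omega) hx
        have := hmin _ _ hq
        omega
      have b3 := hunion (p 1)
      have b4 := splitDeg G (p 1) (B ∪ P)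
      have b5 := hD (p 1)
      have b6 := Finset.card_filter_le (B ∪ P)ᶜ (fun x => G.Adj (p 1) x)
      rw [← Finset.card_pos]
      omega
    · intro u hu
      have hu' : u ∉ B := fun h => Finset.mem_compl.1 hu (Finset.mem_union_left _ h)
      have b1 := earDeg hp hmin u hu' (hB1 u hu')
      rw [← hP] at b1
      have b3 := hunion u
      have b4 := splitDeg G u (B ∪ P)
      have b5 := hD u
      omega
  have hlast := hmax _ hgood hcopy
  have hsub : insert (p 1) B ⊆ B ∪ P := by
    intro x hx
    rcases Finset.mem_insert.1 hx with rfl | h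
    · exact Finset.mem_union_right _ hp1P
    · exact Finset.mem_union_left _ h
  have := Finset.card_le_card hsub
  rw [Finset.card_insert_of_notMem hp1] at this
  omega

/-- For every positive integer `m` and every tree `T` of order `m`, every
`2`-connected graph `G` with `δ(G) ≥ m + 2` contains a subgraph `T' ≅ T`
such that `G - V(T')` is still `2`-connected. -/
theorem stmt_12 {V W : Type*} [Fintype V] [DecidableEq V] [Fintype W]
    (G : SimpleGraph V) [DecidableRel G.Adj] (m : ℕ) (hm : 0 < m)
    (T : SimpleGraph W) (hT : T.IsTree) (hTcard : Fintype.card W = m)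
    (hG : KConnected G 2)
    (hδ : ∀ v : V, m + 2 ≤ G.degree v) :
    ∃ f : W → V, Function.Injective f ∧
      (∀ a b : W, T.Adj a b → G.Adj (f a) (f b)) ∧
      KConnected (G.induce ((Set.range f)ᶜ)) 2 := by
  obtain ⟨r, par, rk, hr, hrk, hpar⟩ := treeParam T hT
  have h0 : (G.induce (Set.univ : Set V)).Connected := by
    have := hG.2 ∅ (by simp)
    rwa [Finset.coe_empty, Set.compl_empty] at this
  have h1 : ∀ x, (G.induce ({x}ᶜ : Set V)).Connected := by
    intro x
    have := hG.2 {x} (by simp)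
    rwa [Finset.coe_singleton] at this
  obtain ⟨v0, -⟩ := h0.nonempty
  have hdeg : ∀ v, G.degree v = (Finset.univ.filter (fun x => G.Adj v x)).card := by
    intro v
    rw [← SimpleGraph.card_neighborFinset_eq_degree, SimpleGraph.neighborFinset_eq_filter]
  obtain ⟨B, f, hB, hf, hcard⟩ := mainAux G par r rk hrk hr h0 h1 (by
    intro v
    have := hδ v
    rw [hdeg v, ← hTcard] at this
    convert this) v0
  have hsub : ∀ x, x ∉ B → x ∈ Set.range f := by
    have e : Finset.univ.image f = Bᶜ := by
      apply Finset.eq_of_subset_of_card_le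
      · intro x hx
        obtain ⟨w, -, rfl⟩ := Finset.mem_image.1 hx
        have := hf.2.2 w
        simpa using this
      · rw [Finset.card_image_of_injective _ hf.1, Finset.card_univ, ← hcard]
        apply le_of_eq
        congr!
    intro x hx
    have : x ∈ Finset.univ.image f := by rw [e]; simpa using hx
    obtain ⟨w, -, rfl⟩ := Finset.mem_image.1 this
    exact ⟨w, rfl⟩
  have hrange : (Set.range f)ᶜ = (B : Set V) := by
    ext x
    constructor
    · intro h; by_contra hx; exact h (hsub x hx)
    · rintro hx ⟨w, rfl⟩
      have := hf.2.2 w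
      simp at this
      exact this hx
  refine ⟨f, hf.1, ?_, ?_⟩
  · intro a b hab
    rcases hpar a b hab with ⟨h, rfl⟩ | ⟨h, rfl⟩
    · exact (hf.2.1 a h).symm
    · exact hf.2.1 b h
  rw [hrange]
  refine ⟨?_, ?_⟩
  · have c1 : Nat.card (B : Set V) = B.card := by simp
    rw [c1]
    have c2 := G.degree_lt_card_verts v0
    have c3 := hδ v0
    have c4 := Finset.card_compl_add_card B
    have c5 : (Bᶜ).card = Fintype.card W := by rw [← hcard]; congr!
    omega
  · intro X hX
    have key : ∀ x : V, (∀ y : (B : Set V), y ∉ X ↔ (y : V) ≠ x) →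
        ((G.induce (B : Set V)).induce ((X : Set (B : Set V))ᶜ)).Connected := by
      intro x hx
      have := hB.2 x
      refine this.map (H := (G.induce (B : Set V)).induce ((X : Set (B : Set V))ᶜ))
        ⟨fun y => ⟨⟨y.1, y.2.1⟩, (hx _).2 y.2.2⟩, fun {a b} h => h⟩ ?_
      rintro ⟨⟨y, hy⟩, hy'⟩
      exact ⟨⟨y, hy, (hx _).1 hy'⟩, rfl⟩
    rcases Nat.lt_succ_iff.1 hX |>.lt_or_eq with hX | hX
    · have : X = ∅ := Finset.card_eq_zero.1 (by omega)
      subst this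
      refine key (f r) ?_
      rintro ⟨y, hy⟩
      simp only [Finset.notMem_empty, not_false_eq_true, true_iff]
      rintro rfl
      have := hf.2.2 r
      simp at this
      exact this hy
    · obtain ⟨x, rfl⟩ := Finset.card_eq_one.1 hX
      refine key x ?_
      intro y
      rw [Finset.mem_singleton, ne_eq, Subtype.ext_iff]
end

section
/- Let k, m be positive integers and let G be a k-connected finite simple graph with κ(G) = k, minimum degree δ(G) ≥ ⌊3k/2⌋ + m − 1, and maximum degree Δ(G) = |V(G)| − 1, and suppose G is not complete. Let t ≥ 0 with t + 1 ≤ m. Then G contains a spider T^{t;m−t−1}_m of order m such that G − V(T^{t;m−t−1}_m) is k-connected. -/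
/-- The spider `T^{t;m-t-1}_m` of order `m`: the root is `0`, the vertices
`1, …, t` are legs of length one attached to the root, and
`t+1, t+2, …, m-1` is one leg which is a path of order `m - t - 1`
starting at the neighbour `t+1` of the root. -/
def spider (m t : ℕ) : SimpleGraph (Fin m) :=
  SimpleGraph.fromRel fun a b =>
    (a.val = 0 ∧ 1 ≤ b.val ∧ b.val ≤ t) ∨
    (a.val = 0 ∧ b.val = t + 1) ∨
    (t + 1 ≤ a.val ∧ b.val = a.val + 1)

namespace Spd
open Finset

section
variable {V : Type*} [Fintype V] [DecidableEq V] (G : SimpleGraph V) [DecidableRel G.Adj]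

/-- outer neighbourhood -/
def nb (D : Finset V) : Finset V :=
  univ.filter (fun v => v ∉ D ∧ ∃ d ∈ D, G.Adj d v)

/-- number of neighbours of `x` in `R` -/
def dg (x : V) (R : Finset V) : ℕ := (univ.filter (fun v => G.Adj x v ∧ v ∈ R)).card

def Good (k : ℕ) (F R : Finset V) : Prop :=
  ∀ D, D ⊆ F \ R → D.Nonempty → k ≤ (nb G D \ R).card

def EndF (k : ℕ) (R B : Finset V) : Prop :=
  B.Nonempty ∧ (nb G B \ R).card ≤ k ∧ ∀ E, E ⊂ B → E.Nonempty → k + 1 ≤ (nb G E \ R).card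

def Opt (k : ℕ) (F : Finset V) : ℕ → Finset V → Finset V → Prop
  | 0, R, B => R = ∅ ∧ B = F
  | e + 1, R', B' =>
    (∃ R B p, Opt k F e R B ∧ p ∈ B ∧ R' = insert p R ∧ B' ⊆ B.erase p ∧ EndF G k R' B') ∧
    (∀ R B p E, Opt k F e R B → p ∈ B → E ⊆ B.erase p → EndF G k (insert p R) E →
      B'.card ≤ E.card)

variable {G}

lemma mem_nb {D : Finset V} {v : V} : v ∈ nb G D ↔ v ∉ D ∧ ∃ d ∈ D, G.Adj d v := by
  simp [nb]

lemma dg_insert_le (x p : V) (R : Finset V) : dg G x (insert p R) ≤ dg G x R + 1 := by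
  unfold dg
  refine le_trans (card_le_card (t := insert p (univ.filter (fun v => G.Adj x v ∧ v ∈ R))) ?_)
    (card_insert_le _ _)
  intro v; simp; tauto

lemma dg_insert_of_not (x p : V) (R : Finset V) (h : ¬ G.Adj x p) :
    dg G x (insert p R) = dg G x R := by
  unfold dg
  congr 1; ext v; simp
  rintro h1 rfl; exact absurd h1 h

/-- degree bound when all neighbours are in `Y` or `R` -/
lemma deg_le (x : V) (R Y : Finset V) (h : ∀ v, G.Adj x v → v ∈ Y ∨ v ∈ R) :
    G.degree x ≤ (Y.erase x).card + dg G x R := by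
  unfold dg
  rw [← SimpleGraph.card_neighborFinset_eq_degree]
  refine le_trans (card_le_card ?_) (card_union_le _ _)
  intro v hv
  rw [SimpleGraph.mem_neighborFinset] at hv
  have := h v hv
  have h2 := hv.ne'
  simp; tauto

lemma submod (R C B : Finset V) :
    (nb G (C ∩ B) \ R).card + (nb G (C ∪ B) \ R).card ≤ (nb G C \ R).card + (nb G B \ R).card := by
  rw [← card_union_add_card_inter (nb G C \ R) (nb G B \ R),
    ← card_union_add_card_inter (nb G (C ∩ B) \ R) (nb G (C ∪ B) \ R)]
  apply add_le_add
  · apply card_le_card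
    intro v
    simp only [mem_union, mem_sdiff, mem_nb, mem_inter]
    rintro (⟨⟨h1, d, hd, h2⟩, h3⟩ | ⟨⟨h1, d, hd, h2⟩, h3⟩)
    · by_cases hc : v ∈ C
      · exact Or.inr ⟨⟨fun h => h1 ⟨hc, h⟩, d, hd.2, h2⟩, h3⟩
      · exact Or.inl ⟨⟨hc, d, hd.1, h2⟩, h3⟩
    · rcases hd with hd | hd
      · exact Or.inl ⟨⟨fun h => h1 (Or.inl h), d, hd, h2⟩, h3⟩
      · exact Or.inr ⟨⟨fun h => h1 (Or.inr h), d, hd, h2⟩, h3⟩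
  · apply card_le_card
    intro v
    simp only [mem_union, mem_sdiff, mem_nb, mem_inter]
    rintro ⟨⟨⟨h1, d, hd, h2⟩, h3⟩, ⟨⟨h4, -⟩, -⟩⟩
    exact ⟨⟨⟨fun h => h4 (Or.inl h), d, hd.1, h2⟩, h3⟩, ⟨⟨fun h => h4 (Or.inr h), d, hd.2, h2⟩, h3⟩⟩

lemma exists_end (k : ℕ) (R D : Finset V) (hD : D.Nonempty) (h : (nb G D \ R).card ≤ k) :
    ∃ E, E ⊆ D ∧ EndF G k R E := by
  induction hn : D.card using Nat.strong_induction_on generalizing D with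
  | _ n ih =>
    by_cases hE : ∃ E, E ⊂ D ∧ E.Nonempty ∧ (nb G E \ R).card ≤ k
    · obtain ⟨E, h1, h2, h3⟩ := hE
      obtain ⟨E', h4, h5⟩ := ih E.card (hn ▸ card_lt_card h1) E h2 h3 rfl
      exact ⟨E', h4.trans h1.1, h5⟩
    · push Not at hE
      exact ⟨D, Subset.refl _, hD, h, fun E h1 h2 => hE E h1 h2⟩

/-- Removing a vertex of an end keeps goodness. -/
lemma step {k m : ℕ} {F R B : Finset V} {u : V}
    (hdeg : ∀ v : V, 3 * k / 2 + m ≤ G.degree v + 1)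
    (hu : ∀ v, v ≠ u → G.Adj v u) (huF : u ∉ F)
    (hR : R ⊆ F) (hB : B ⊆ F \ R) (hg : Good G k F R) (he : EndF G k R B)
    (hb : ∀ b ∈ B, dg G b R + 1 ≤ m)
    (hs : ∀ c ∈ F, c ∈ nb G B \ R → dg G c R ≤ m)
    {p : V} (hp : p ∈ B) : Good G k F (insert p R) := by
  intro C hC hCne
  by_contra hlt
  push Not at hlt
  obtain ⟨hBne, hS, hmin⟩ := he
  have hCF : ∀ c ∈ C, c ∈ F ∧ c ≠ p ∧ c ∉ R := by
    intro c hc; have := hC hc; simp at this; tauto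
  have hBF : ∀ c ∈ B, c ∈ F ∧ c ∉ R := by
    intro c hc; have := hB hc; simp at this; tauto
  have hCR : C ⊆ F \ R := by
    intro c hc; have := hCF c hc; simp; tauto
  set T := nb G C \ R with hT
  set S := nb G B \ R with hSd
  have huR : u ∉ R := fun h => huF (hR h)
  have hTk : T.card ≤ k := by
    have : T ⊆ insert p (nb G C \ insert p R) := by
      intro v hv; simp [hT] at hv ⊢; tauto
    have := (card_le_card this).trans (card_insert_le _ _)
    omega
  have hTk' : k ≤ T.card := hg C hCR hCne
  have hpT : p ∈ T := by
    by_contra h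
    have : T ⊆ (nb G C \ insert p R) := by
      intro v hv
      have : v ≠ p := fun h' => h (h' ▸ hv)
      simp [hT] at hv ⊢; tauto
    have := card_le_card this
    omega
  have hUF : C ∪ B ⊆ F \ R := union_subset hCR hB
  have hU := hg (C ∪ B) hUF (hCne.mono subset_union_left)
  -- disjoint
  have hdis : ∀ x ∈ C, x ∉ B := by
    intro x hx hxB
    have h1 : C ∩ B ⊂ B := by
      refine ⟨inter_subset_right, fun h => ?_⟩
      exact (hCF p (mem_inter.1 (h hp)).1).2.1 rfl
    have h2 := hmin _ h1 ⟨x, mem_inter.2 ⟨hx, hxB⟩⟩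
    have h3 := submod (G := G) R C B
    rw [← hT, ← hSd] at h3
    omega
  have huT : u ∈ T := by
    obtain ⟨c, hc⟩ := hCne
    rw [hT, mem_sdiff, mem_nb]
    refine ⟨⟨fun h => huF (hCF u h).1, c, hc, hu c ?_⟩, huR⟩
    rintro rfl; exact huF (hCF c hc).1
  have huS : u ∈ S := by
    rw [hSd, mem_sdiff, mem_nb]
    refine ⟨⟨fun h => huF (hBF u h).1, p, hp, hu p ?_⟩, huR⟩
    rintro rfl; exact huF (hBF p hp).1
  have huC : u ∉ C := fun h => huF (hCF u h).1
  have huB : u ∉ B := fun h => huF (hBF u h).1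
  have hST : (C ∩ S).card + (S \ C).card = S.card := by
    rw [inter_comm]; exact card_inter_add_card_sdiff S C
  have hTB : (T ∩ B).card + (T \ B).card = T.card := card_inter_add_card_sdiff T B
  have h3 : (C ∩ S).card + 1 ≤ (T \ B).card := by
    have h1 : nb G (C ∪ B) \ R ⊆ (S \ C) ∪ (T \ B) := by
      intro v
      simp only [hT, hSd, mem_union, mem_sdiff, mem_nb]
      rintro ⟨⟨h1, d, hd | hd, h2⟩, h3⟩
      · exact Or.inr ⟨⟨⟨fun h => h1 (Or.inl h), d, hd, h2⟩, h3⟩, fun h => h1 (Or.inr h)⟩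
      · exact Or.inl ⟨⟨⟨fun h => h1 (Or.inr h), d, hd, h2⟩, h3⟩, fun h => h1 (Or.inl h)⟩
    have h2 := card_le_card h1
    have h4 := card_union_add_card_inter (S \ C) (T \ B)
    have h5 : 0 < ((S \ C) ∩ (T \ B)).card := card_pos.2 ⟨u, by simp [huT, huS, huC, huB]⟩
    omega
  have hBk : k / 2 + 1 ≤ B.card := by
    have h1 := deg_le (G := G) p R (B ∪ S) (by
      intro v hv
      by_cases h : v ∈ B
      · simp [h]
      by_cases h' : v ∈ R
      · exact Or.inr h'
      · left; rw [mem_union]; right; rw [hSd, mem_sdiff, mem_nb]; exact ⟨⟨h, p, hp, hv⟩, h'⟩)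
    rw [card_erase_of_mem (mem_union_left _ hp)] at h1
    have h2 := card_union_le B S
    have h4 := hb p hp
    have h5 := hdeg p
    have h6 : 0 < B.card := card_pos.2 hBne
    omega
  have h2 : (C ∩ S).card + 1 ≤ (T ∩ B).card := by
    by_cases hE : (B \ T).Nonempty
    · have hss : B \ T ⊂ B := ⟨sdiff_subset, fun h => (mem_sdiff.1 (h hp)).2 hpT⟩
      have h4 := hmin _ hss hE
      have h5 : nb G (B \ T) \ R ⊆ (S \ C) ∪ (T ∩ B) := by
        intro v hv
        rw [mem_sdiff, mem_nb] at hv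
        obtain ⟨⟨h1, d, hd, h2⟩, h3⟩ := hv
        rw [mem_sdiff] at h1 hd
        rw [mem_union, mem_inter, mem_sdiff]
        by_cases hvB : v ∈ B
        · right; exact ⟨by_contra fun h => h1 ⟨hvB, h⟩, hvB⟩
        · left
          refine ⟨?_, fun hvC => hd.2 ?_⟩
          · rw [hSd, mem_sdiff, mem_nb]; exact ⟨⟨hvB, d, hd.1, h2⟩, h3⟩
          · rw [hT, mem_sdiff, mem_nb]
            exact ⟨⟨fun h => hdis d h hd.1, v, hvC, h2.symm⟩, (hBF d hd.1).2⟩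
      have h6 := (card_le_card h5).trans (card_union_le _ _)
      omega
    · have hBT : B ⊆ T := by
        intro x hx; by_contra h; exact hE ⟨x, mem_sdiff.2 ⟨hx, h⟩⟩
      rw [inter_eq_right.2 hBT] at hTB ⊢
      omega
  by_cases hC0 : (C \ S).Nonempty
  · have h4 := hg (C \ S) (sdiff_subset.trans hCR) hC0
    have h5 : nb G (C \ S) \ R ⊆ (T \ B) ∪ (C ∩ S) := by
      intro v hv
      rw [mem_sdiff, mem_nb] at hv
      obtain ⟨⟨h1, d, hd, h2⟩, h3⟩ := hv
      rw [mem_sdiff] at h1 hd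
      rw [mem_union, mem_inter, mem_sdiff]
      by_cases hvC : v ∈ C
      · right; exact ⟨hvC, by_contra fun h => h1 ⟨hvC, h⟩⟩
      · left
        refine ⟨?_, fun hvB => hd.2 ?_⟩
        · rw [hT, mem_sdiff, mem_nb]; exact ⟨⟨hvC, d, hd.1, h2⟩, h3⟩
        · rw [hSd, mem_sdiff, mem_nb]
          exact ⟨⟨hdis d hd.1, v, hvB, h2.symm⟩, (hCF d hd.1).2.2⟩
    have h6 := (card_le_card h5).trans (card_union_le _ _)
    omega
  · have hCS : C ⊆ S := by
      intro x hx; by_contra h; exact hC0 ⟨x, mem_sdiff.2 ⟨hx, h⟩⟩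
    rw [inter_eq_left.2 hCS] at h2 h3
    obtain ⟨c, hc⟩ := hCne
    have h1 := deg_le (G := G) c R (C ∪ T) (by
      intro v hv
      by_cases h : v ∈ C
      · simp [h]
      by_cases h' : v ∈ R
      · exact Or.inr h'
      · left; rw [mem_union]; right; rw [hT, mem_sdiff, mem_nb]; exact ⟨⟨h, c, hc, hv⟩, h'⟩)
    rw [card_erase_of_mem (mem_union_left _ hc)] at h1
    have h4 := card_union_le C T
    have h5 := hdeg c
    have h6 := hs c (hCF c hc).1 (hCS hc)
    have h7 : 0 < C.card := card_pos.2 ⟨c, hc⟩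
    omega
end

section
variable {V : Type*} [Fintype V] [DecidableEq V] {G : SimpleGraph V} [DecidableRel G.Adj]

lemma opt_facts {k : ℕ} {F : Finset V} (hF : EndF G k ∅ F) : ∀ e R B, Opt G k F e R B →
    R ⊆ F ∧ B ⊆ F \ R ∧ EndF G k R B ∧ B.card + e ≤ F.card := by
  intro e
  induction e with
  | zero =>
    rintro R B ⟨rfl, rfl⟩
    simp [hF]
  | succ e ih =>
    rintro R' B' ⟨⟨R, B, p, h, hp, rfl, hB', he⟩, -⟩
    obtain ⟨h1, h2, h3, h4⟩ := ih R B h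
    have hpF := mem_sdiff.1 (h2 hp)
    refine ⟨insert_subset hpF.1 h1, ?_, he, ?_⟩
    · intro b hb
      have h5 := mem_erase.1 (hB' hb)
      have h6 := mem_sdiff.1 (h2 h5.2)
      simp [h5, h6]
    · have := card_le_card hB'
      rw [card_erase_of_mem hp] at this
      have : 0 < B.card := card_pos.2 ⟨p, hp⟩
      omega

lemma swap_aux {k : ℕ} {F : Finset V} {e : ℕ} {R1 R' B B' : Finset V} {c r q : V}
    (h : Opt G k F e R1 B) (hq : q ∈ B) (hB : B' ⊆ B.erase q) (hr : r ∈ R')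
    (hc : c ∈ nb G B' \ R') (hE : EndF G k R' B')
    (hmin : ∀ R B p E, Opt G k F e R B → p ∈ B → E ⊆ B.erase p → EndF G k (insert p R) E →
      B'.card ≤ E.card)
    (heq : insert q R1 = insert c (R'.erase r)) :
    Opt G k F (e + 1) (insert c (R'.erase r)) B' := by
  refine ⟨⟨R1, B, q, h, hq, heq.symm, hB, hE.1, ?_, ?_⟩, hmin⟩
  · have h1 : nb G B' \ insert c (R'.erase r) ⊆ insert r ((nb G B' \ R').erase c) := by
      intro v; simp; tauto
    have h2 := (card_le_card h1).trans (card_insert_le _ _)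
    rw [card_erase_of_mem hc] at h2
    have : 0 < (nb G B' \ R').card := card_pos.2 ⟨c, hc⟩
    have := hE.2.1
    omega
  · intro E hEB hne
    by_contra hlt
    obtain ⟨E', h1, h2⟩ := exists_end (G := G) k (insert c (R'.erase r)) E hne (by omega)
    have := hmin R1 B q E' h hq ((h1.trans hEB.1).trans hB) (heq ▸ h2)
    have := card_lt_card hEB
    have := card_le_card h1
    omega

lemma swap {k : ℕ} {F : Finset V} (hF : EndF G k ∅ F) : ∀ e R B, Opt G k F e R B →
    ∀ c ∈ F, c ∈ nb G B \ R → ∃ r ∈ R, Opt G k F e (insert c (R.erase r)) B := by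
  intro e
  induction e with
  | zero =>
    rintro R B ⟨rfl, rfl⟩ c hc h
    simp [mem_nb, hc] at h
  | succ e ih =>
    rintro R' B' ⟨⟨R, B, p, h, hp, rfl, hB', he⟩, hmin⟩ c hcF hc
    obtain ⟨h1, h2, h3, h4⟩ := opt_facts hF e R B h
    have hpF := mem_sdiff.1 (h2 hp)
    have hc' := hc
    simp only [mem_sdiff, mem_nb, mem_insert, not_or] at hc'
    obtain ⟨⟨hcB', d, hd, hdc⟩, hcp, hcR⟩ := hc'
    by_cases hcB : c ∈ B
    · refine ⟨p, mem_insert_self _ _, ?_⟩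
      refine swap_aux (q := c) (R1 := R) h hcB ?_ (mem_insert_self _ _) hc he hmin ?_
      · intro x hx
        have := mem_erase.1 (hB' hx)
        exact mem_erase.2 ⟨fun h => hcB' (h ▸ hx), this.2⟩
      · rw [erase_insert hpF.2]
    · obtain ⟨r, hr, h5⟩ := ih R B h c hcF (by
        rw [mem_sdiff, mem_nb]
        exact ⟨⟨hcB, d, (mem_erase.1 (hB' hd)).2, hdc⟩, hcR⟩)
      refine ⟨r, mem_insert_of_mem hr, ?_⟩
      refine swap_aux h5 hp hB' (mem_insert_of_mem hr) hc he hmin ?_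
      have : p ≠ r := fun h => hpF.2 (h ▸ hr)
      ext v; simp
      by_cases hvp : v = p
      · subst hvp; tauto
      · tauto

lemma next_end {k m : ℕ} {F R B : Finset V}
    (hdeg : ∀ v : V, 3 * k / 2 + m ≤ G.degree v + 1)
    (he : EndF G k R B) {p : V} (hp : p ∈ B) (hd : dg G p R + 2 ≤ m) :
    ∃ B', B' ⊆ B.erase p ∧ EndF G k (insert p R) B' := by
  apply exists_end
  · by_contra hne
    rw [not_nonempty_iff_eq_empty] at hne
    have h1 := deg_le (G := G) p R (nb G B \ R) (by
      intro v hv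
      by_cases h' : v ∈ R
      · exact Or.inr h'
      · left; rw [mem_sdiff, mem_nb]
        refine ⟨⟨fun h => ?_, p, hp, hv⟩, h'⟩
        have : v ∈ B.erase p := mem_erase.2 ⟨hv.ne', h⟩
        rw [hne] at this; simp at this)
    have := card_erase_le (s := nb G B \ R) (a := p)
    have := he.2.1
    have := hdeg p
    omega
  · refine (card_le_card ?_).trans he.2.1
    intro v
    simp only [mem_sdiff, mem_nb, mem_insert, mem_erase]
    rintro ⟨⟨h1, d, hd, h2⟩, h3⟩
    exact ⟨⟨fun h => h1 ⟨fun h4 => h3 (Or.inl h4), h⟩, d, hd.2, h2⟩, fun h => h3 (Or.inr h)⟩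

lemma p_mem {k : ℕ} {R B B' : Finset V} (he : EndF G k R B) {p : V} (hp : p ∈ B)
    (hB' : B' ⊆ B.erase p) (he' : EndF G k (insert p R) B') : p ∈ nb G B' := by
  by_contra h
  have hss : B' ⊂ B := ⟨hB'.trans (erase_subset _ _), fun h => by simpa using hB' (h hp)⟩
  have h1 := he.2.2 B' hss he'.1
  have h2 := he'.2.1
  have : nb G B' \ R ⊆ nb G B' \ insert p R := by
    intro v hv
    rw [mem_sdiff] at hv ⊢
    refine ⟨hv.1, ?_⟩
    rw [mem_insert]; rintro (rfl | h3)
    · exact h hv.1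
    · exact hv.2 h3
  have := card_le_card this
  omega

lemma nb_sub {R B B' : Finset V} {p c : V} (hB' : B' ⊆ B.erase p)
    (hc : c ∈ nb G B' \ insert p R) : c ∈ B ∨ c ∈ nb G B \ R := by
  simp only [mem_sdiff, mem_nb, mem_insert, not_or] at hc ⊢
  obtain ⟨⟨h1, d, hd, h2⟩, h3⟩ := hc
  by_cases h : c ∈ B
  · exact Or.inl h
  · exact Or.inr ⟨⟨h, d, (mem_erase.1 (hB' hd)).2, h2⟩, h3.2⟩

lemma path_lemma {k m : ℕ} {F : Finset V} {u : V}
    (hdeg : ∀ v : V, 3 * k / 2 + m ≤ G.degree v + 1)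
    (hu : ∀ v, v ≠ u → G.Adj v u) (huF : u ∉ F) : ∀ (s : ℕ) (R : Finset V) (x : V) (β : ℕ),
    Good G k F R → R ⊆ F → x ∈ R → (∀ r ∈ R, dg G r R ≤ β) → β + s ≤ m →
    (0 < s → ∃ B, B ⊆ F \ R ∧ EndF G k R B ∧ x ∈ nb G B ∧ (∀ b ∈ B, dg G b R ≤ β) ∧
      ∀ c ∈ F, c ∈ nb G B \ R → dg G c R ≤ β + 1) →
    ∃ l : List V, l.length = s ∧ l.Nodup ∧ (∀ v ∈ l, v ∈ F ∧ v ∉ R) ∧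
      List.IsChain G.Adj (x :: l) ∧ Good G k F (R ∪ l.toFinset) ∧
      ∀ r ∈ R ∪ l.toFinset, dg G r (R ∪ l.toFinset) ≤ β + s := by
  intro s
  induction s with
  | zero =>
    intro R x β hg hR hx hd hβ _
    exact ⟨[], by simp, by simp, by simp, by simp, by simpa using hg, by simpa using hd⟩
  | succ s ih =>
    intro R x β hg hR hx hd hβ hB
    obtain ⟨B, hB, he, hxB, hb, hc⟩ := hB (by omega)
    obtain ⟨hxB, p, hp, hpx⟩ := mem_nb.1 hxB
    have hpF := mem_sdiff.1 (hB hp)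
    have hg' : Good G k F (insert p R) := step hdeg hu huF hR hB hg he
      (fun b h => by have := hb b h; omega) (fun c h h' => by have := hc c h h'; omega) hp
    obtain ⟨l, h1, h2, h3, h4, h5, h6⟩ := ih (insert p R) p (β + 1) hg'
      (insert_subset hpF.1 hR) (mem_insert_self _ _) (by
        intro r hr
        have := dg_insert_le (G := G) r p R
        rcases mem_insert.1 hr with rfl | hr
        · have := hb r hp; omega
        · have := hd r hr; omega) (by omega) (by
        intro hs
        obtain ⟨B', h1, h2⟩ := next_end (F := F) hdeg he hp (by have := hb p hp; omega)
        refine ⟨B', ?_, h2, p_mem he hp h1 h2, ?_, ?_⟩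
        · intro b hb
          have h5 := mem_erase.1 (h1 hb)
          have h6 := mem_sdiff.1 (hB h5.2)
          simp [h5, h6]
        · intro b hb'
          have := dg_insert_le (G := G) b p R
          have := hb b (mem_erase.1 (h1 hb')).2
          omega
        · intro c hcF hc'
          have := dg_insert_le (G := G) c p R
          rcases nb_sub h1 hc' with h | h
          · have := hb c h; omega
          · have := hc c hcF h; omega)
    have heq : R ∪ (p :: l).toFinset = insert p R ∪ l.toFinset := by
      ext v; simp
    refine ⟨p :: l, by simp [h1], ?_, ?_, ?_, ?_, ?_⟩
    · rw [List.nodup_cons]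
      exact ⟨fun h => (h3 p h).2 (mem_insert_self _ _), h2⟩
    · intro v hv
      rcases List.mem_cons.1 hv with rfl | hv
      · exact hpF
      · exact ⟨(h3 v hv).1, fun h => (h3 v hv).2 (mem_insert_of_mem h)⟩
    · rw [List.isChain_cons_cons]; exact ⟨hpx.symm, h4⟩
    · rw [heq]; exact h5
    · rw [heq]; intro r hr; have := h6 r hr; omega

def Weak (G : SimpleGraph V) [DecidableRel G.Adj] (t : ℕ) (F R B : Finset V) : Prop :=
  (∀ b ∈ B, dg G b R ≤ t) ∧ (∀ c ∈ F, c ∈ nb G B \ R → dg G c R ≤ t + 1) ∧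
    ∀ r ∈ R, dg G r R ≤ t

def Strong (G : SimpleGraph V) [DecidableRel G.Adj] (t : ℕ) (F R B : Finset V) : Prop :=
  (∀ b ∈ B, dg G b R < t) ∧ (∀ c ∈ F, c ∈ nb G B \ R → dg G c R < t + 1) ∧
    ∀ r ∈ R, r ∈ nb G B → dg G r R < t

lemma all_weak {k m t : ℕ} {F : Finset V} {u : V}
    (hdeg : ∀ v : V, 3 * k / 2 + m ≤ G.degree v + 1)
    (hu : ∀ v, v ≠ u → G.Adj v u) (huF : u ∉ F) (ht : t + 1 ≤ m)
    (hF : EndF G k ∅ F) (hgF : Good G k F ∅) : ∀ e,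
    (∀ i < e, ∀ R B, Opt G k F i R B → Strong G t F R B) →
    ∀ R B, Opt G k F e R B → Weak G t F R B ∧ Good G k F R := by
  intro e
  induction e with
  | zero =>
    rintro - R B ⟨rfl, rfl⟩
    refine ⟨⟨?_, ?_, ?_⟩, hgF⟩ <;> simp [dg]
  | succ e ih =>
    rintro hst R' B' ⟨⟨R, B, p, h, hp, rfl, hB', he'⟩, -⟩
    obtain ⟨hw, hg⟩ := ih (fun i hi => hst i (by omega)) R B h
    obtain ⟨h1, h2, he, -⟩ := opt_facts hF e R B h
    have hs := hst e (by omega) R B h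
    refine ⟨⟨?_, ?_, ?_⟩, step hdeg hu huF h1 h2 hg he (fun b h => by have := hw.1 b h; omega)
      (fun c h h' => by have := hw.2.1 c h h'; omega) hp⟩
    · intro b hb
      have := dg_insert_le (G := G) b p R
      have := hs.1 b (mem_erase.1 (hB' hb)).2
      omega
    · intro c hcF hc'
      have := dg_insert_le (G := G) c p R
      rcases nb_sub hB' hc' with h | h
      · have := hs.1 c h; omega
      · have := hs.2.1 c hcF h; omega
    · intro r hr
      have := dg_insert_le (G := G) r p R
      rcases mem_insert.1 hr with rfl | hr
      · have := hs.1 r hp; omega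
      · by_cases hrB : r ∈ nb G B
        · have := hs.2.2 r hr hrB; omega
        · have hn : ¬ G.Adj r p := fun h => hrB (mem_nb.2
            ⟨fun h' => (mem_sdiff.1 (h2 h')).2 hr, p, hp, h.symm⟩)
          rw [dg_insert_of_not _ _ _ hn]
          exact hw.2.2 r hr

lemma exists_viol {k m t : ℕ} {F : Finset V}
    (hdeg : ∀ v : V, 3 * k / 2 + m ≤ G.degree v + 1) (ht : t + 1 ≤ m)
    (hF : EndF G k ∅ F) : ∃ e R B, Opt G k F e R B ∧ ¬ Strong G t F R B := by
  by_contra hcon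
  push Not at hcon
  have key : ∀ e, ∃ R B, Opt G k F e R B := by
    intro e
    induction e with
    | zero => exact ⟨∅, F, rfl, rfl⟩
    | succ e ih =>
      obtain ⟨R, B, h⟩ := ih
      have hs := hcon e R B h
      obtain ⟨h1, h2, he, -⟩ := opt_facts hF e R B h
      obtain ⟨p, hp⟩ := he.1
      obtain ⟨B', h3, h4⟩ := next_end (F := F) hdeg he hp (by have := hs.1 p hp; omega)
      have hex : ∃ n, ∃ R B p E, Opt G k F e R B ∧ p ∈ B ∧ E ⊆ B.erase p ∧
          EndF G k (insert p R) E ∧ E.card = n := ⟨_, R, B, p, B', h, hp, h3, h4, rfl⟩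
      classical
      obtain ⟨R1, B1, p1, E1, g1, g2, g3, g4, g5⟩ := Nat.find_spec hex
      refine ⟨insert p1 R1, E1, ⟨R1, B1, p1, g1, g2, rfl, g3, g4⟩, ?_⟩
      intro R B p E i1 i2 i3 i4
      rw [g5]
      exact Nat.find_min' hex ⟨R, B, p, E, i1, i2, i3, i4, rfl⟩
  obtain ⟨R, B, h⟩ := key (F.card + 1)
  have := (opt_facts hF _ R B h).2.2.2
  omega

lemma finish_root {k m t : ℕ} {F : Finset V} {u : V}
    (hdeg : ∀ v : V, 3 * k / 2 + m ≤ G.degree v + 1)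
    (hu : ∀ v, v ≠ u → G.Adj v u) (huF : u ∉ F) (ht : t + 1 ≤ m)
    {R : Finset V} {x : V} (hg : Good G k F R) (hR : R ⊆ F) (hx : x ∈ R)
    (hd : ∀ r ∈ R, dg G r R ≤ t + 1) (hxt : t ≤ dg G x R)
    (hB : 0 < m - t - 1 → ∃ B, B ⊆ F \ R ∧ EndF G k R B ∧ x ∈ nb G B ∧
      (∀ b ∈ B, dg G b R ≤ t + 1) ∧ ∀ c ∈ F, c ∈ nb G B \ R → dg G c R ≤ t + 1 + 1) :
    ∃ (x : V) (L l : List V), L.length = t ∧ l.length = m - t - 1 ∧ (x :: (L ++ l)).Nodup ∧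
      (∀ v ∈ L, G.Adj x v) ∧ List.IsChain G.Adj (x :: l) ∧
      ∃ P : Finset V, P ⊆ F ∧ (∀ v ∈ x :: (L ++ l), v ∈ P) ∧ Good G k F P ∧
        ∀ r ∈ P, dg G r P ≤ m := by
  obtain ⟨l, h1, h2, h3, h4, h5, h6⟩ := path_lemma hdeg hu huF (m - t - 1) R x (t + 1) hg hR hx hd
    (by omega) hB
  obtain ⟨L, hL, hLt⟩ := exists_subset_card_eq hxt
  have hL' : ∀ v ∈ L, G.Adj x v ∧ v ∈ R := by
    intro v hv; have := hL hv; simpa using this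
  refine ⟨x, L.toList, l, by simp [hLt], h1, ?_, ?_, h4, R ∪ l.toFinset, ?_, ?_, h5, ?_⟩
  · rw [List.nodup_cons, List.nodup_append]
    refine ⟨?_, L.nodup_toList, h2, ?_⟩
    · intro h
      rcases List.mem_append.1 h with h | h
      · exact (hL' x (by simpa using h)).1.ne rfl
      · exact (h3 x h).2 hx
    · rintro a ha b hb rfl
      exact (h3 a hb).2 (hL' a (by simpa using ha)).2
  · intro v hv; exact (hL' v (by simpa using hv)).1
  · intro v hv
    rcases mem_union.1 hv with h | h
    · exact hR h
    · exact (h3 v (by simpa using h)).1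
  · intro v hv
    simp only [List.mem_cons, List.mem_append, mem_toList] at hv
    rw [mem_union, List.mem_toFinset]
    rcases hv with rfl | h | h
    · exact Or.inl hx
    · exact Or.inl (hL' v h).2
    · exact Or.inr h
  · intro r hr; have := h6 r hr; omega

lemma find_spider {k m t : ℕ} {F : Finset V} {u : V}
    (hdeg : ∀ v : V, 3 * k / 2 + m ≤ G.degree v + 1)
    (hu : ∀ v, v ≠ u → G.Adj v u) (huF : u ∉ F) (ht : t + 1 ≤ m)
    (hF : EndF G k ∅ F) (hgF : Good G k F ∅) :
    ∃ (x : V) (L l : List V), L.length = t ∧ l.length = m - t - 1 ∧ (x :: (L ++ l)).Nodup ∧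
      (∀ v ∈ L, G.Adj x v) ∧ List.IsChain G.Adj (x :: l) ∧
      ∃ P : Finset V, P ⊆ F ∧ (∀ v ∈ x :: (L ++ l), v ∈ P) ∧ Good G k F P ∧
        ∀ r ∈ P, dg G r P ≤ m := by
  classical
  have hex := exists_viol (G := G) hdeg ht hF
  obtain ⟨R, B, ho, hv⟩ := Nat.find_spec hex
  have hlow : ∀ i < Nat.find hex, ∀ R B, Opt G k F i R B → Strong G t F R B := by
    intro i hi R B h
    by_contra hn
    exact Nat.find_min hex hi ⟨R, B, h, hn⟩
  have hW := all_weak hdeg hu huF ht hF hgF _ hlow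
  generalize Nat.find hex = e at *
  -- the case of a root in R
  have caseC : ∀ R B r, Opt G k F e R B → r ∈ R → r ∈ nb G B → t ≤ dg G r R →
      ∃ (x : V) (L l : List V), L.length = t ∧ l.length = m - t - 1 ∧ (x :: (L ++ l)).Nodup ∧
      (∀ v ∈ L, G.Adj x v) ∧ List.IsChain G.Adj (x :: l) ∧
      ∃ P : Finset V, P ⊆ F ∧ (∀ v ∈ x :: (L ++ l), v ∈ P) ∧ Good G k F P ∧
        ∀ r ∈ P, dg G r P ≤ m := by
    intro R B r ho hr hrB hrt
    obtain ⟨⟨w1, w2, w3⟩, hg⟩ := hW R B ho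
    obtain ⟨h1, h2, he, -⟩ := opt_facts hF e R B ho
    exact finish_root hdeg hu huF ht hg h1 hr (fun r h => by have := w3 r h; omega) hrt
      (fun _ => ⟨B, h2, he, hrB, fun b h => by have := w1 b h; omega,
        fun c h h' => by have := w2 c h h'; omega⟩)
  obtain ⟨⟨w1, w2, w3⟩, hg⟩ := hW R B ho
  obtain ⟨h1, h2, he, -⟩ := opt_facts hF e R B ho
  by_cases ha : ∃ b ∈ B, t ≤ dg G b R
  · obtain ⟨b, hb, hbt⟩ := ha
    have hbF := mem_sdiff.1 (h2 hb)
    have hg' : Good G k F (insert b R) := step hdeg hu huF h1 h2 hg he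
      (fun b h => by have := w1 b h; omega) (fun c h h' => by have := w2 c h h'; omega) hb
    refine finish_root hdeg hu huF ht (x := b) hg' (insert_subset hbF.1 h1) (mem_insert_self _ _)
      ?_ ?_ ?_
    · intro r hr
      have := dg_insert_le (G := G) r b R
      rcases mem_insert.1 hr with rfl | hr
      · have := w1 r hb; omega
      · have := w3 r hr; omega
    · rw [dg_insert_of_not _ _ _ (G.irrefl)]; exact hbt
    · intro hs
      obtain ⟨B', h3, h4⟩ := next_end (F := F) hdeg he hb (by have := w1 b hb; omega)
      refine ⟨B', ?_, h4, p_mem he hb h3 h4, ?_, ?_⟩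
      · intro v hv
        have h5 := mem_erase.1 (h3 hv)
        have h6 := mem_sdiff.1 (h2 h5.2)
        simp [h5, h6]
      · intro v hv
        have := dg_insert_le (G := G) v b R
        have := w1 v (mem_erase.1 (h3 hv)).2
        omega
      · intro c hcF hc'
        have := dg_insert_le (G := G) c b R
        rcases nb_sub h3 hc' with h | h
        · have := w1 c h; omega
        · have := w2 c hcF h; omega
  by_cases hc : ∃ r ∈ R, r ∈ nb G B ∧ t ≤ dg G r R
  · obtain ⟨r, h3, h4, h5⟩ := hc
    exact caseC R B r ho h3 h4 h5
  by_cases hb : ∃ c ∈ F, c ∈ nb G B \ R ∧ t + 1 ≤ dg G c R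
  · obtain ⟨c, h3, h4, h5⟩ := hb
    obtain ⟨r, hr, h6⟩ := swap hF e R B ho c h3 h4
    refine caseC _ B c h6 (mem_insert_self _ _) (mem_sdiff.1 h4).1 ?_
    rw [dg_insert_of_not _ _ _ (G.irrefl)]
    have := dg_insert_le (G := G) c r (R.erase r)
    rw [insert_erase hr] at this
    omega
  exfalso
  push Not at ha hb hc
  exact hv ⟨ha, hb, hc⟩
end

section
variable {V : Type*} [Fintype V] [DecidableEq V] {G : SimpleGraph V} [DecidableRel G.Adj]

lemma good_W {k m : ℕ} {F P W : Finset V} {u : V} (hk : 0 < k)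
    (hdeg : ∀ v : V, 3 * k / 2 + m ≤ G.degree v + 1)
    (hu : ∀ v, v ≠ u → G.Adj v u) (huF : u ∉ F) (hPF : P ⊆ F) (hWP : W ⊆ P)
    (hg : Good G k F P) (hd : ∀ r ∈ P, dg G r P ≤ m) : Good G k F W := by
  intro C hC hne
  by_cases hCP : (C \ P).Nonempty
  · refine (hg (C \ P) ?_ hCP).trans (card_le_card ?_)
    · intro c hc
      rw [mem_sdiff] at hc ⊢
      exact ⟨(mem_sdiff.1 (hC hc.1)).1, hc.2⟩
    · intro v
      simp only [mem_sdiff, mem_nb]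
      rintro ⟨⟨h1, d, hd, h2⟩, h3⟩
      exact ⟨⟨fun h => h1 ⟨h, h3⟩, d, hd.1, h2⟩, fun h => h3 (hWP h)⟩
  · have hCP' : C ⊆ P := by
      intro x hx; by_contra h; exact hCP ⟨x, mem_sdiff.2 ⟨hx, h⟩⟩
    obtain ⟨r, hr⟩ := hne
    have hupos : 0 < (nb G C \ W).card := by
      refine card_pos.2 ⟨u, ?_⟩
      rw [mem_sdiff, mem_nb]
      refine ⟨⟨fun h => huF (hPF (hCP' h)), r, hr, hu r ?_⟩, fun h => huF (hPF (hWP h))⟩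
      rintro rfl; exact huF (hPF (hCP' hr))
    have h1 := deg_le (G := G) r P (nb G C \ W) (by
      intro v hv
      by_cases h : v ∈ P
      · exact Or.inr h
      · left; rw [mem_sdiff, mem_nb]
        exact ⟨⟨fun h' => h (hCP' h'), r, hr, hv⟩, fun h' => h (hWP h')⟩)
    have := card_erase_le (s := nb G C \ W) (a := r)
    have := hd r (hCP' hr)
    have := hdeg r
    omega

lemma card_three (F S Y : Finset V) (hd : Disjoint F S) :
    Y.card = (Y ∩ F).card + (Y ∩ S).card + (Y ∩ (univ \ (F ∪ S))).card := by
  have h1 := card_inter_add_card_sdiff Y (F ∪ S)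
  have h2 : Y ∩ (univ \ (F ∪ S)) = Y \ (F ∪ S) := by ext; simp
  have h3 : Y ∩ (F ∪ S) = (Y ∩ F) ∪ (Y ∩ S) := inter_union_distrib_left _ _ _
  have h4 : Disjoint (Y ∩ F) (Y ∩ S) := hd.mono inter_subset_right inter_subset_right
  rw [h3, card_union_of_disjoint h4] at h1
  rw [h2]; omega

/-- partition into four parts -/
lemma card_four (A C X W Y : Finset V) (hcov : ∀ v, v ∈ A ∨ v ∈ C ∨ v ∈ X ∨ v ∈ W)
    (hAC : Disjoint A C) (hAX : Disjoint A X) (hCX : Disjoint C X)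
    (hAW : Disjoint A W) (hCW : Disjoint C W) (hXW : Disjoint X W) :
    Y.card = (A ∩ Y).card + (C ∩ Y).card + (X ∩ Y).card + (W ∩ Y).card := by
  have h : Y = (A ∩ Y) ∪ ((C ∩ Y) ∪ ((X ∩ Y) ∪ (W ∩ Y))) := by
    ext v; have := hcov v; simp; tauto
  conv_lhs => rw [h]
  rw [card_union_of_disjoint, card_union_of_disjoint, card_union_of_disjoint]
  · omega
  · exact hXW.mono inter_subset_left inter_subset_left
  · rw [disjoint_union_right]
    exact ⟨hCX.mono inter_subset_left inter_subset_left, hCW.mono inter_subset_left inter_subset_left⟩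
  · rw [disjoint_union_right, disjoint_union_right]
    exact ⟨hAC.mono inter_subset_left inter_subset_left, hAX.mono inter_subset_left inter_subset_left,
      hAW.mono inter_subset_left inter_subset_left⟩

lemma part_size {k m : ℕ} {A C X W : Finset V}
    (hdeg : ∀ v : V, 3 * k / 2 + m ≤ G.degree v + 1)
    (hWm : W.card = m) (hcov : ∀ v, v ∈ A ∨ v ∈ C ∨ v ∈ X ∨ v ∈ W)
    (hE : ∀ a ∈ A, ∀ c ∈ C, ¬ G.Adj a c) (hA : A.Nonempty) (hXk : X.card + 1 ≤ k) :
    k / 2 + 1 ≤ A.card := by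
  obtain ⟨a, ha⟩ := hA
  have h1 := deg_le (G := G) a ∅ (A ∪ (X ∪ W)) (by
    intro v hv
    left
    have h1 := hcov v
    have h2 : v ∉ C := fun h => hE a ha v h hv
    simp; tauto)
  rw [card_erase_of_mem (mem_union_left _ ha)] at h1
  have h2 := card_union_le A (X ∪ W)
  have h3 := card_union_le X W
  have h4 := hdeg a
  have h5 : 0 < A.card := card_pos.2 ⟨a, ha⟩
  have h6 : dg G a ∅ = 0 := by simp [dg]
  omega

lemma transferA {k m : ℕ} {F W A C X : Finset V} 
    (hdeg : ∀ v : V, 3 * k / 2 + m ≤ G.degree v + 1)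
    (hconn : ∀ D : Finset V, D.Nonempty → (∃ v, v ∉ D ∧ v ∉ nb G D) → k ≤ (nb G D).card)
    (hS : (nb G F).card ≤ k) (hFk : k / 2 + m ≤ F.card)
    (hWF : W ⊆ F) (hWm : W.card = m) (hI : Good G k F W)
    (hcov : ∀ v, v ∈ A ∨ v ∈ C ∨ v ∈ X ∨ v ∈ W)
    (hAC : Disjoint A C) (hAX : Disjoint A X) (hCX : Disjoint C X)
    (hAW : Disjoint A W) (hCW : Disjoint C W) (hXW : Disjoint X W)
    (hE : ∀ a ∈ A, ∀ c ∈ C, ¬ G.Adj a c) (hA : A.Nonempty) (hC : C.Nonempty)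
    (hXk : X.card + 1 ≤ k) (hAF : (A ∩ (univ \ (F ∪ nb G F))).Nonempty) : False := by
  have hdFS : Disjoint F (nb G F) := by
    rw [disjoint_left]; intro a ha h; exact (mem_nb.1 h).1 ha
  have hsA := part_size hdeg hWm hcov hE hA hXk
  have hsC := part_size (A := C) (C := A) hdeg hWm (fun v => by have := hcov v; tauto)
    (fun a ha c hc h => hE c hc a ha h.symm) hC hXk
  have cA := card_three F (nb G F) A hdFS
  have cC := card_three F (nb G F) C hdFS
  have cX := card_three F (nb G F) X hdFS
  have cS := card_four A C X W (nb G F) hcov hAC hAX hCX hAW hCW hXW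
  have cF := card_four A C X W F hcov hAC hAX hCX hAW hCW hXW
  have cW : (W ∩ F).card = m := by rw [inter_eq_left.2 hWF, hWm]
  -- general facts about the pieces
  have bar : ∀ A' C' : Finset V, (∀ v, v ∈ A' ∨ v ∈ C' ∨ v ∈ X ∨ v ∈ W) →
      (∀ a ∈ A', ∀ c ∈ C', ¬ G.Adj a c) → Disjoint A' C' → C'.Nonempty →
      (A' ∩ (univ \ (F ∪ nb G F))).Nonempty →
      k ≤ (A' ∩ nb G F).card + (X ∩ nb G F).card + (X ∩ (univ \ (F ∪ nb G F))).card := by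
    intro A' C' hcov hE hdis hC hne
    refine (hconn _ hne ?_).trans ?_
    · obtain ⟨c, hc⟩ := hC
      refine ⟨c, fun h => (disjoint_left.1 hdis (mem_inter.1 h).1 hc), fun h => ?_⟩
      obtain ⟨-, d, hd, h2⟩ := mem_nb.1 h
      exact hE d (mem_inter.1 hd).1 c hc h2
    · have : nb G (A' ∩ (univ \ (F ∪ nb G F))) ⊆ ((A' ∩ nb G F) ∪ (X ∩ nb G F)) ∪
          (X ∩ (univ \ (F ∪ nb G F))) := by
        intro v hv
        obtain ⟨h1, d, hd, h2⟩ := mem_nb.1 hv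
        have hv1 : v ∉ C' := fun h => hE d (mem_inter.1 hd).1 v h h2
        have hv2 : v ∉ F := by
          intro h
          simp only [mem_inter, mem_sdiff, mem_union, not_or] at hd
          exact hd.2.2.2 (mem_nb.2 ⟨hd.2.2.1, v, h, h2.symm⟩)
        have hv3 : v ∉ W := fun h => hv2 (hWF h)
        have := hcov v
        simp only [mem_inter, mem_sdiff, mem_union, not_or, mem_univ, true_and] at h1 ⊢
        tauto
      have h1 := card_le_card this
      have h2 := card_union_le ((A' ∩ nb G F) ∪ (X ∩ nb G F)) (X ∩ (univ \ (F ∪ nb G F)))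
      have h3 := card_union_le (A' ∩ nb G F) (X ∩ nb G F)
      omega
  have ins : ∀ A' C' : Finset V, (∀ v, v ∈ A' ∨ v ∈ C' ∨ v ∈ X ∨ v ∈ W) →
      (∀ a ∈ A', ∀ c ∈ C', ¬ G.Adj a c) → Disjoint A' W → (A' ∩ F).Nonempty →
      k ≤ (A' ∩ nb G F).card + (X ∩ nb G F).card + (X ∩ F).card := by
    intro A' C' hcov hE hdis hne
    refine (hI _ ?_ hne).trans ?_
    · intro v hv
      rw [mem_inter] at hv
      exact mem_sdiff.2 ⟨hv.2, disjoint_left.1 hdis hv.1⟩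
    · have : nb G (A' ∩ F) \ W ⊆ ((A' ∩ nb G F) ∪ (X ∩ nb G F)) ∪ (X ∩ F) := by
        intro v hv
        rw [mem_sdiff] at hv
        obtain ⟨hv, hvW⟩ := hv
        obtain ⟨h1, d, hd, h2⟩ := mem_nb.1 hv
        have hv1 : v ∉ C' := fun h => hE d (mem_inter.1 hd).1 v h h2
        have hv2 : v ∈ F ∨ v ∈ nb G F := by
          by_cases h : v ∈ F
          · exact Or.inl h
          · exact Or.inr (mem_nb.2 ⟨h, d, (mem_inter.1 hd).2, h2⟩)
        have := hcov v
        simp only [mem_inter, mem_union] at h1 ⊢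
        tauto
      have h1 := card_le_card this
      have h2 := card_union_le ((A' ∩ nb G F) ∪ (X ∩ nb G F)) (X ∩ F)
      have h3 := card_union_le (A' ∩ nb G F) (X ∩ nb G F)
      omega
  have hcov' : ∀ v, v ∈ C ∨ v ∈ A ∨ v ∈ X ∨ v ∈ W := fun v => by have := hcov v; tauto
  have hE' : ∀ a ∈ C, ∀ c ∈ A, ¬ G.Adj a c := fun a ha c hc h => hE c hc a ha h.symm
  have b1 := bar A C hcov hE hAC hC hAF
  have z : ∀ Y : Finset V, ¬ Y.Nonempty → Y.card = 0 := by
    intro Y h; rw [not_nonempty_iff_eq_empty] at h; simp [h]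
  by_cases hCF : (C ∩ F).Nonempty
  · have i1 := ins C A hcov' hE' hCW hCF
    omega
  have z1 := z _ hCF
  by_cases hCb : (C ∩ (univ \ (F ∪ nb G F))).Nonempty
  · have b2 := bar C A hcov' hE' hAC.symm hA hCb
    by_cases hAF' : (A ∩ F).Nonempty
    · have i1 := ins A C hcov hE hAW hAF'
      omega
    · have z2 := z _ hAF'
      omega
  · have z2 := z _ hCb
    by_cases hAF' : (A ∩ F).Nonempty
    · have i1 := ins A C hcov hE hAW hAF'
      omega
    · have z2 := z _ hAF'
      omega

lemma transfer {k m : ℕ} {F W A C X : Finset V} (hm : 0 < m)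
    (hdeg : ∀ v : V, 3 * k / 2 + m ≤ G.degree v + 1)
    (hconn : ∀ D : Finset V, D.Nonempty → (∃ v, v ∉ D ∧ v ∉ nb G D) → k ≤ (nb G D).card)
    (hS : (nb G F).card ≤ k) (hFk : k / 2 + m ≤ F.card)
    (hFb : F.card ≤ (univ \ (F ∪ nb G F)).card)
    (hWF : W ⊆ F) (hWm : W.card = m) (hI : Good G k F W)
    (hcov : ∀ v, v ∈ A ∨ v ∈ C ∨ v ∈ X ∨ v ∈ W)
    (hAC : Disjoint A C) (hAX : Disjoint A X) (hCX : Disjoint C X)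
    (hAW : Disjoint A W) (hCW : Disjoint C W) (hXW : Disjoint X W)
    (hE : ∀ a ∈ A, ∀ c ∈ C, ¬ G.Adj a c) (hA : A.Nonempty) (hC : C.Nonempty)
    (hXk : X.card + 1 ≤ k) : False := by
  have hcov' : ∀ v, v ∈ C ∨ v ∈ A ∨ v ∈ X ∨ v ∈ W := fun v => by have := hcov v; tauto
  have hE' : ∀ a ∈ C, ∀ c ∈ A, ¬ G.Adj a c := fun a ha c hc h => hE c hc a ha h.symm
  by_cases h1 : (A ∩ (univ \ (F ∪ nb G F))).Nonempty
  · exact transferA hdeg hconn hS hFk hWF hWm hI hcov hAC hAX hCX hAW hCW hXW hE hA hC hXk h1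
  by_cases h2 : (C ∩ (univ \ (F ∪ nb G F))).Nonempty
  · exact transferA hdeg hconn hS hFk hWF hWm hI hcov' hAC.symm hCX hAX hCW hAW hXW hE' hC hA hXk h2
  have z : ∀ Y : Finset V, ¬ Y.Nonempty → Y.card = 0 := by
    intro Y h; rw [not_nonempty_iff_eq_empty] at h; simp [h]
  have hdFS : Disjoint F (nb G F) := by
    rw [disjoint_left]; intro a ha h; exact (mem_nb.1 h).1 ha
  have hsA := part_size hdeg hWm hcov hE hA hXk
  have hsC := part_size hdeg hWm hcov' hE' hC hXk
  have cA := card_three F (nb G F) A hdFS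
  have cC := card_three F (nb G F) C hdFS
  have cX := card_three F (nb G F) X hdFS
  have cS := card_four A C X W (nb G F) hcov hAC hAX hCX hAW hCW hXW
  have cF := card_four A C X W F hcov hAC hAX hCX hAW hCW hXW
  have cB := card_four A C X W (univ \ (F ∪ nb G F)) hcov hAC hAX hCX hAW hCW hXW
  have cW : (W ∩ F).card = m := by rw [inter_eq_left.2 hWF, hWm]
  have cW' : (W ∩ (univ \ (F ∪ nb G F))).card = 0 := by
    apply z; rintro ⟨w, hw⟩
    simp only [mem_inter, mem_sdiff, mem_union, not_or] at hw
    exact hw.2.2.1 (hWF hw.1)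
  have z1 := z _ h1
  have z2 := z _ h2
  have key : ∀ A' C' : Finset V, (∀ v, v ∈ A' ∨ v ∈ C' ∨ v ∈ X ∨ v ∈ W) →
      (∀ a ∈ A', ∀ c ∈ C', ¬ G.Adj a c) → (A' ∩ F).Nonempty →
      3 * k / 2 ≤ A'.card + (X ∩ F).card + (X ∩ nb G F).card := by
    rintro A' C' hcov hE ⟨a, ha⟩
    rw [mem_inter] at ha
    have h1 := deg_le (G := G) a ∅ (A' ∪ ((X ∩ F) ∪ ((X ∩ nb G F) ∪ W))) (by
      intro v hv
      left
      have h1 := hcov v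
      have h2 : v ∉ C' := fun h => hE a ha.1 v h hv
      have hv2 : v ∈ F ∨ v ∈ nb G F := by
        by_cases h : v ∈ F
        · exact Or.inl h
        · exact Or.inr (mem_nb.2 ⟨h, a, ha.2, hv⟩)
      simp only [mem_union, mem_inter]; tauto)
    rw [card_erase_of_mem (mem_union_left _ ha.1)] at h1
    have h2 := card_union_le A' ((X ∩ F) ∪ ((X ∩ nb G F) ∪ W))
    have h3 := card_union_le (X ∩ F) ((X ∩ nb G F) ∪ W)
    have h3 := card_union_le (X ∩ nb G F) W
    have h4 := hdeg a
    have h5 : 0 < A'.card := card_pos.2 ⟨a, ha.1⟩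
    have h6 : dg G a ∅ = 0 := by simp [dg]
    omega
  by_cases hAF : (A ∩ F).Nonempty
  · have := key A C hcov hE hAF
    omega
  by_cases hCF : (C ∩ F).Nonempty
  · have := key C A hcov' hE' hCF
    omega
  have z3 := z _ hAF
  have z4 := z _ hCF
  omega

lemma adj_all (x : V) (h : Fintype.card V ≤ G.degree x + 1) : ∀ v, v ≠ x → G.Adj v x := by
  intro v hv
  by_contra hn
  have h1 : G.neighborFinset x ⊆ (univ.erase x).erase v := by
    intro w hw
    rw [SimpleGraph.mem_neighborFinset] at hw
    have := hw.ne'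
    have : w ≠ v := by rintro rfl; exact hn hw.symm
    simp [*]
  have h2 := card_le_card h1
  rw [SimpleGraph.card_neighborFinset_eq_degree, card_erase_of_mem (by simp [hv]),
    card_erase_of_mem (mem_univ _), card_univ] at h2
  have : 1 < Fintype.card V := Fintype.one_lt_card_iff.2 ⟨v, x, hv⟩
  omega

lemma kconn_nb {k : ℕ} (h : KConnected G k) (D : Finset V) (hD : D.Nonempty)
    (hv : ∃ v, v ∉ D ∧ v ∉ nb G D) : k ≤ (nb G D).card := by
  by_contra hlt
  have hc := h.2 (nb G D) (by omega)
  obtain ⟨d, hd⟩ := hD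
  obtain ⟨v, hv1, hv2⟩ := hv
  have hd' : d ∉ nb G D := fun h => (mem_nb.1 h).1 hd
  obtain ⟨w⟩ := hc.preconnected ⟨d, by simpa using hd'⟩ ⟨v, by simpa using hv2⟩
  have key : ∀ (a b : ((nb G D : Set V)ᶜ : Set V)), (G.induce ((nb G D : Set V)ᶜ)).Walk a b →
      a.1 ∈ D → b.1 ∈ D := by
    intro a b w
    induction w with
    | nil => exact id
    | @cons a b c hadj _ ih =>
      intro ha
      apply ih
      by_contra hb
      have h1 : b.1 ∉ nb G D := fun h => b.2 h
      exact h1 (mem_nb.2 ⟨hb, _, ha, hadj⟩)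
  exact hv1 (key _ _ w hd)
end

lemma not_conn_sep {W : Type*} [Fintype W] (H : SimpleGraph W) (X : Finset W)
    (hX : X.card < Fintype.card W) (h : ¬ (H.induce ((X : Set W)ᶜ)).Connected) :
    ∃ A C : Finset W, A.Nonempty ∧ C.Nonempty ∧ (∀ v, v ∈ A ∨ v ∈ C ∨ v ∈ X) ∧
      Disjoint A C ∧ Disjoint A X ∧ Disjoint C X ∧ ∀ a ∈ A, ∀ c ∈ C, ¬ H.Adj a c := by
  classical
  have hne : Nonempty ((X : Set W)ᶜ : Set W) := by
    by_contra hn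
    have : X = univ := by
      ext v; simp; by_contra hv; exact hn ⟨v, by simpa using hv⟩
    rw [this, card_univ] at hX
    omega
  have hnp : ¬ (H.induce ((X : Set W)ᶜ)).Preconnected := fun hp => h ⟨hp⟩
  unfold SimpleGraph.Preconnected at hnp
  push Not at hnp
  obtain ⟨a, b, hab⟩ := hnp
  let A : Finset W := univ.filter (fun v => ∃ hv : v ∈ ((X : Set W)ᶜ : Set W),
    (H.induce ((X : Set W)ᶜ)).Reachable a ⟨v, hv⟩)
  let C : Finset W := univ.filter (fun v => ∃ hv : v ∈ ((X : Set W)ᶜ : Set W),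
    ¬ (H.induce ((X : Set W)ᶜ)).Reachable a ⟨v, hv⟩)
  have hA : ∀ v, v ∈ A ↔ ∃ hv : v ∈ ((X : Set W)ᶜ : Set W),
    (H.induce ((X : Set W)ᶜ)).Reachable a ⟨v, hv⟩ := fun v => by simp [A]
  have hC : ∀ v, v ∈ C ↔ ∃ hv : v ∈ ((X : Set W)ᶜ : Set W),
    ¬ (H.induce ((X : Set W)ᶜ)).Reachable a ⟨v, hv⟩ := fun v => by simp [C]
  refine ⟨A, C, ⟨a.1, (hA _).2 ⟨a.2, SimpleGraph.Reachable.refl _⟩⟩, ⟨b.1, (hC _).2 ⟨b.2, hab⟩⟩,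
    ?_, ?_, ?_, ?_, ?_⟩
  · intro v
    by_cases hv : v ∈ X
    · exact Or.inr (Or.inr hv)
    · have hv' : v ∈ ((X : Set W)ᶜ : Set W) := by simpa using hv
      by_cases hr : (H.induce ((X : Set W)ᶜ)).Reachable a ⟨v, hv'⟩
      · exact Or.inl ((hA v).2 ⟨hv', hr⟩)
      · exact Or.inr (Or.inl ((hC v).2 ⟨hv', hr⟩))
  · rw [disjoint_left]
    intro v h1 h2
    obtain ⟨_, h1⟩ := (hA v).1 h1
    obtain ⟨_, h2⟩ := (hC v).1 h2
    exact h2 h1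
  · rw [disjoint_left]
    intro v h1 h2
    obtain ⟨h1, _⟩ := (hA v).1 h1
    exact h1 h2
  · rw [disjoint_left]
    intro v h1 h2
    obtain ⟨h1, _⟩ := (hC v).1 h1
    exact h1 h2
  · intro x hx y hy hadj
    obtain ⟨p1, h1⟩ := (hA x).1 hx
    obtain ⟨p2, h2⟩ := (hC y).1 hy
    have had : (H.induce ((X : Set W)ᶜ)).Adj ⟨x, p1⟩ ⟨y, p2⟩ := hadj
    exact h2 (h1.trans had.reachable)

section
variable {V : Type*} [Fintype V] [DecidableEq V] {G : SimpleGraph V} [DecidableRel G.Adj]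

lemma exists_frag {k m : ℕ} (hm : 0 < m) (hnc : G ≠ ⊤)
    (hκ₁ : KConnected G k) (hκ₂ : ¬ KConnected G (k + 1))
    (hdeg : ∀ v : V, 3 * k / 2 + m ≤ G.degree v + 1) :
    ∃ D : Finset V, D.Nonempty ∧ (∃ v, v ∉ D ∧ v ∉ nb G D) ∧ (nb G D).card ≤ k := by
  have hc := hκ₁.1
  rw [Nat.card_eq_fintype_card] at hc
  by_cases hcard : k + 2 ≤ Fintype.card V
  · unfold KConnected at hκ₂
    rw [Nat.card_eq_fintype_card] at hκ₂
    push Not at hκ₂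
    obtain ⟨X, hX, hn⟩ := hκ₂ (by omega)
    obtain ⟨A, C, hA, ⟨c, hc⟩, hcov, hAC, hAX, hCX, hE⟩ := not_conn_sep G X (by omega) hn
    refine ⟨A, hA, ⟨c, fun h => disjoint_left.1 hAC h hc, fun h => ?_⟩, ?_⟩
    · obtain ⟨-, d, hd, h2⟩ := mem_nb.1 h
      exact hE d hd c hc h2
    · have : nb G A ⊆ X := by
        intro v hv
        obtain ⟨h1, d, hd, h2⟩ := mem_nb.1 hv
        rcases hcov v with h | h | h
        · exact absurd h h1
        · exact absurd h2 (hE d hd v h)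
        · exact h
      have := card_le_card this
      omega
  · exfalso
    apply hnc
    ext a b
    rw [SimpleGraph.top_adj]
    refine ⟨fun h => h.ne, fun h => adj_all b ?_ a h⟩
    have := hdeg b
    omega

lemma exists_F {k m : ℕ} {u : V} (hm : 0 < m) (hnc : G ≠ ⊤)
    (hκ₁ : KConnected G k) (hκ₂ : ¬ KConnected G (k + 1))
    (hdeg : ∀ v : V, 3 * k / 2 + m ≤ G.degree v + 1)
    (hu : ∀ v, v ≠ u → G.Adj v u) :
    ∃ F : Finset V, u ∉ F ∧ EndF G k ∅ F ∧ Good G k F ∅ ∧ (nb G F).card ≤ k ∧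
      k ≤ (nb G F).card ∧ k / 2 + m ≤ F.card ∧ F.card ≤ (univ \ (F ∪ nb G F)).card := by
  classical
  have hex : ∃ n, ∃ D : Finset V, D.Nonempty ∧ (∃ v, v ∉ D ∧ v ∉ nb G D) ∧ (nb G D).card ≤ k ∧
      D.card = n := by
    obtain ⟨D, h1, h2, h3⟩ := exists_frag hm hnc hκ₁ hκ₂ hdeg
    exact ⟨_, D, h1, h2, h3, rfl⟩
  obtain ⟨F, hF, ⟨v, hv1, hv2⟩, hFk, hFn⟩ := Nat.find_spec hex
  have hmin : ∀ D : Finset V, D.Nonempty → (∃ v, v ∉ D ∧ v ∉ nb G D) → (nb G D).card ≤ k →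
      F.card ≤ D.card := by
    intro D h1 h2 h3
    rw [hFn]
    exact Nat.find_min' hex ⟨D, h1, h2, h3, rfl⟩
  have hsub : ∀ E, E ⊆ F → ∃ v, v ∉ E ∧ v ∉ nb G E := by
    intro E hE
    refine ⟨v, fun h => hv1 (hE h), fun h => hv2 ?_⟩
    obtain ⟨-, d, hd, h2⟩ := mem_nb.1 h
    exact mem_nb.2 ⟨hv1, d, hE hd, h2⟩
  refine ⟨F, ?_, ⟨hF, by simpa using hFk, ?_⟩, ?_, hFk, kconn_nb hκ₁ F hF ⟨v, hv1, hv2⟩, ?_, ?_⟩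
  · intro h
    exact hv2 (mem_nb.2 ⟨hv1, u, h, (hu v (fun h' => hv1 (h' ▸ h))).symm⟩)
  · intro E hE hne
    by_contra hlt
    have h1 := hmin E hne (hsub E hE.1) (by simpa using hlt)
    have := card_lt_card hE
    omega
  · intro D hD hne
    simpa using kconn_nb hκ₁ D hne (hsub D (by simpa using hD))
  · obtain ⟨x, hx⟩ := hF
    have h1 := deg_le (G := G) x ∅ (F ∪ nb G F) (by
      intro v hv
      left
      by_cases h : v ∈ F
      · simp [h]
      · exact mem_union_right _ (mem_nb.2 ⟨h, x, hx, hv⟩))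
    rw [card_erase_of_mem (mem_union_left _ hx)] at h1
    have h2 := card_union_le F (nb G F)
    have h4 := hdeg x
    have h5 : 0 < F.card := card_pos.2 ⟨x, hx⟩
    have h6 : dg G x ∅ = 0 := by simp [dg]
    omega
  · have hns : nb G (univ \ (F ∪ nb G F)) ⊆ nb G F := by
      intro w hw
      obtain ⟨h1, d, hd, h2⟩ := mem_nb.1 hw
      simp only [mem_sdiff, mem_univ, true_and, mem_union, not_or, not_and, not_not] at h1 hd
      exact h1 (fun h => hd.2 (mem_nb.2 ⟨hd.1, w, h, h2.symm⟩))
    refine hmin _ ⟨v, by simp [hv1, hv2]⟩ ?_ ((card_le_card hns).trans hFk)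
    obtain ⟨x, hx⟩ := hF
    exact ⟨x, by simp [hx], fun h => (mem_nb.1 (hns h)).1 hx⟩

lemma spider_embed {m t : ℕ} (ht : t + 1 ≤ m) {x : V} {L l : List V} (hL : L.length = t)
    (hl : l.length = m - t - 1) (hnd : (x :: (L ++ l)).Nodup)
    (hadj : ∀ v ∈ L, G.Adj x v) (hch : List.IsChain G.Adj (x :: l)) :
    ∃ f : Fin m → V, Function.Injective f ∧
      (∀ a b : Fin m, (spider m t).Adj a b → G.Adj (f a) (f b)) ∧
      Set.range f = {v | v ∈ x :: (L ++ l)} := by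
  have hlen : (x :: (L ++ l)).length = m := by simp; omega
  have hch' := List.isChain_iff_getElem.1 hch
  let f : Fin m → V := fun i => (x :: (L ++ l))[i.1]'(by rw [hlen]; exact i.2)
  have e1 : ∀ (b : Fin m) (h1 : 1 ≤ b.1) (h2 : b.1 ≤ t), f b ∈ L := by
    intro b h1 h2
    obtain ⟨b, hb⟩ := b
    obtain ⟨c, rfl⟩ : ∃ c, b = c + 1 := ⟨b - 1, by simp at h1; omega⟩
    have : f ⟨c + 1, hb⟩ = L[c]'(by simp at h2; omega) := by
      simp only [f, List.getElem_cons_succ]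
      rw [List.getElem_append_left]
    rw [this]; exact List.getElem_mem _
  have e2 : ∀ (j : ℕ) (h : t + 1 + j < m), f ⟨t + 1 + j, h⟩ = l[j]'(by omega) := by
    intro j h
    have h3 : t + 1 + j = (t + j) + 1 := by omega
    simp only [f, h3, List.getElem_cons_succ]
    rw [List.getElem_append_right (by omega)]
    congr 1; omega
  have rel : ∀ a b : Fin m, ((a.val = 0 ∧ 1 ≤ b.val ∧ b.val ≤ t) ∨
    (a.val = 0 ∧ b.val = t + 1) ∨ (t + 1 ≤ a.val ∧ b.val = a.val + 1)) → G.Adj (f a) (f b) := by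
    rintro a b (⟨h1, h2, h3⟩ | ⟨h1, h2⟩ | ⟨h1, h2⟩)
    · have : f a = x := by simp [f, h1]
      rw [this]; exact hadj _ (e1 b h2 h3)
    · have : f a = x := by simp [f, h1]
      have hb := b.2
      have h4 : b = ⟨t + 1 + 0, by omega⟩ := by ext; simp [h2]
      rw [this, h4, e2]
      exact hch' 0 (by simp; omega)
    · have hb := b.2
      have h3 : a = ⟨t + 1 + (a.1 - t - 1), by omega⟩ := by ext; simp; omega
      have h4 : b = ⟨t + 1 + (a.1 - t - 1 + 1), by omega⟩ := by ext; simp; omega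
      have g1 := (congrArg f h3).trans (e2 _ _)
      have g2 := (congrArg f h4).trans (e2 _ _)
      rw [g1, g2]
      exact hch' (a.1 - t - 1 + 1) (by simp; omega)
  refine ⟨f, ?_, ?_, ?_⟩
  · intro a b hab
    ext
    exact (hnd.getElem_inj_iff).1 hab
  · intro a b hab
    rw [spider, SimpleGraph.fromRel_adj] at hab
    rcases hab.2 with h | h
    · exact rel a b h
    · exact (rel b a h).symm
  · ext v
    rw [Set.mem_ofPred_eq, List.mem_iff_getElem]
    constructor
    · rintro ⟨i, rfl⟩; exact ⟨i.1, by rw [hlen]; exact i.2, rfl⟩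
    · rintro ⟨i, hi, rfl⟩; exact ⟨⟨i, by rw [hlen] at hi; exact hi⟩, rfl⟩
end

end Spd
/-- Let `k, m` be positive integers and let `G` be a non-complete graph with
`κ(G) = k`, `δ(G) ≥ ⌊3k/2⌋ + m - 1` and `Δ(G) = |G| - 1`, and let `t ≥ 0`
with `t + 1 ≤ m`. Then `G` contains a spider `T^{t;m-t-1}_m` of order `m`
such that `G - V(T^{t;m-t-1}_m)` is `k`-connected. -/
theorem stmt_16 {V : Type*} [Fintype V] [DecidableEq V] (G : SimpleGraph V)
    [DecidableRel G.Adj] (k m t : ℕ) (hk : 0 < k) (hm : 0 < m) (ht : t + 1 ≤ m)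
    (hnc : G ≠ ⊤)
    (hκ₁ : KConnected G k) (hκ₂ : ¬ KConnected G (k + 1))
    (hδ : ∀ v : V, 3 * k / 2 + m - 1 ≤ G.degree v)
    (hΔ : ∃ v : V, G.degree v = Fintype.card V - 1) :
    ∃ f : Fin m → V, Function.Injective f ∧
      (∀ a b : Fin m, (spider m t).Adj a b → G.Adj (f a) (f b)) ∧
      KConnected (G.induce ((Set.range f)ᶜ)) k := by
  classical
  have hdeg : ∀ v : V, 3 * k / 2 + m ≤ G.degree v + 1 := fun v => by have := hδ v; omega
  obtain ⟨u, hu0⟩ := hΔ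
  have hu : ∀ v, v ≠ u → G.Adj v u := Spd.adj_all u (by omega)
  obtain ⟨F, huF, hF, hgF, hSk, hkS, hFm, hFb⟩ := Spd.exists_F hm hnc hκ₁ hκ₂ hdeg hu
  obtain ⟨x, L, l, hL, hl, hnd, hadj, hch, P, hPF, hWP, hgP, hdP⟩ :=
    Spd.find_spider hdeg hu huF ht hF hgF
  obtain ⟨f, hf, hfa, hfr⟩ := Spd.spider_embed ht hL hl hnd hadj hch
  refine ⟨f, hf, hfa, ?_⟩
  let W : Finset V := Finset.univ.image f
  have hWr : ∀ v, v ∈ W ↔ v ∈ Set.range f := fun v => by simp [W]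
  have hWm : W.card = m := by
    rw [Finset.card_image_of_injective _ hf, Finset.card_univ, Fintype.card_fin]
  have hWP' : W ⊆ P := by
    intro v hv
    rw [hWr, hfr] at hv
    exact hWP v hv
  have hI : Spd.Good G k F W := Spd.good_W hk hdeg hu huF hPF hWP' hgP hdP
  have hcardV : Fintype.card V = F.card + (Spd.nb G F).card +
      (Finset.univ \ (F ∪ Spd.nb G F)).card := by
    have hd : Disjoint F (Spd.nb G F) := by
      rw [Finset.disjoint_left]; intro a ha h; exact (Spd.mem_nb.1 h).1 ha
    have := Spd.card_three F (Spd.nb G F) Finset.univ hd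
    simpa using this
  have hcard : Fintype.card ((Set.range f)ᶜ : Set V) = Fintype.card V - m := by
    rw [Fintype.card_compl_set, Set.card_range_of_injective hf, Fintype.card_fin]
  have hc1 : k + 1 ≤ Fintype.card ((Set.range f)ᶜ : Set V) := by omega
  refine ⟨by rw [Nat.card_eq_fintype_card]; exact hc1, ?_⟩
  intro X hX
  by_contra hn
  obtain ⟨A, C, hA, hC, hcov, hAC, hAX, hCX, hE⟩ := Spd.not_conn_sep _ X (by omega) hn
  let i : ((Set.range f)ᶜ : Set V) ↪ V := Function.Embedding.subtype _
  have hW : ∀ Y : Finset ((Set.range f)ᶜ : Set V), Disjoint (Y.map i) W := by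
    intro Y
    rw [Finset.disjoint_left]
    intro v hv hvW
    obtain ⟨y, -, rfl⟩ := Finset.mem_map.1 hv
    exact y.2 ((hWr _).1 hvW)
  refine Spd.transfer (A := A.map i) (C := C.map i) (X := X.map i) (W := W) hm hdeg
    (fun D h1 h2 => Spd.kconn_nb hκ₁ D h1 h2) hSk hFm hFb (hWP'.trans hPF) hWm hI ?_
    ((Finset.disjoint_map i).2 hAC) ((Finset.disjoint_map i).2 hAX) ((Finset.disjoint_map i).2 hCX)
    (hW A) (hW C) (hW X) ?_ (hA.map) (hC.map) (by rw [Finset.card_map]; omega)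
  · intro v
    by_cases hv : v ∈ W
    · tauto
    · have hv' : v ∈ ((Set.range f)ᶜ : Set V) := fun h => hv ((hWr v).2 h)
      have : ∀ Y : Finset ((Set.range f)ᶜ : Set V), (⟨v, hv'⟩ : ((Set.range f)ᶜ : Set V)) ∈ Y →
          v ∈ Y.map i := fun Y h => Finset.mem_map.2 ⟨_, h, rfl⟩
      rcases hcov ⟨v, hv'⟩ with h | h | h
      · exact Or.inl (this _ h)
      · exact Or.inr (Or.inl (this _ h))
      · exact Or.inr (Or.inr (Or.inl (this _ h)))
  · intro a ha c hc
    obtain ⟨a, ha1, rfl⟩ := Finset.mem_map.1 ha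
    obtain ⟨c, hc1, rfl⟩ := Finset.mem_map.1 hc
    exact hE a ha1 c hc1
end
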